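/- For every α > 0 there exist n₀ and g > 0 such that for all n ≥ n₀, every subset A ⊆ [n] with |A| ≥ α·n contains at least g·n² four-term arithmetic progressions, i.e. at least g·n² pairs (x, d) with d ≥ 1 such that x, x+d, x+2d, x+3d ∈ A. -/

import Mathlib

/-- The pairs `(x, d)` with `d ≥ 1` forming a 4-term arithmetic progression
`x, x+d, x+2d, x+3d` inside `A ⊆ [n]`. -/
def fourAPs (n : ℕ) (A : Finset ℕ) : Finset (ℕ × ℕ) :=
  (Finset.Icc 1 n ×ˢ Finset.Icc 1 n).filter
    (fun p => p.1 ∈ A ∧ p.1 + p.2 ∈ A ∧ p.1 + 2 * p.2 ∈ A ∧ p.1 + 3 * p.2 ∈ A)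

set_option linter.unusedSectionVars false
set_option linter.unusedVariables false
namespace Varn

section basics

noncomputable def av {Ω : Type} [Fintype Ω] (F : Ω → ℝ) : ℝ := (∑ x, F x) / Fintype.card Ω

open Classical in
noncomputable def ind (P : Prop) : ℝ := if P then 1 else 0

theorem ind_pos {P : Prop} (h : P) : ind P = 1 := by simp [ind, h]
theorem ind_neg {P : Prop} (h : ¬ P) : ind P = 0 := by simp [ind, h]
theorem ind_nonneg (P : Prop) : 0 ≤ ind P := by
  by_cases h : P <;> simp [ind, h]
theorem ind_le_one (P : Prop) : ind P ≤ 1 := by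
  by_cases h : P <;> simp [ind, h]
theorem ind_and (P Q : Prop) : ind (P ∧ Q) = ind P * ind Q := by
  by_cases h : P <;> by_cases h' : Q <;> simp [ind, h, h']
theorem ind_not (P : Prop) : ind (¬ P) = 1 - ind P := by
  by_cases h : P <;> simp [ind, h]
theorem ind_mono {P Q : Prop} (h : P → Q) : ind P ≤ ind Q := by
  by_cases hp : P
  · rw [ind_pos hp, ind_pos (h hp)]
  · rw [ind_neg hp]; exact ind_nonneg _
theorem ind_congr {P Q : Prop} (h : P ↔ Q) : ind P = ind Q := by
  rw [propext h]

variable {Ω : Type} [Fintype Ω]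

theorem av_mono {F G : Ω → ℝ} (h : ∀ x, F x ≤ G x) : av F ≤ av G := by
  unfold av
  exact div_le_div_of_nonneg_right (Finset.sum_le_sum fun x _ => h x) (by positivity)

theorem av_add (F G : Ω → ℝ) : av (fun x => F x + G x) = av F + av G := by
  unfold av; rw [Finset.sum_add_distrib, add_div]
theorem av_sub (F G : Ω → ℝ) : av (fun x => F x - G x) = av F - av G := by
  unfold av; rw [Finset.sum_sub_distrib, sub_div]
theorem av_smul (a : ℝ) (F : Ω → ℝ) : av (fun x => a * F x) = a * av F := by
  unfold av; rw [← Finset.mul_sum, mul_div_assoc]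
theorem av_sum {ι : Type*} (s : Finset ι) (F : ι → Ω → ℝ) :
    av (fun x => ∑ i ∈ s, F i x) = ∑ i ∈ s, av (F i) := by
  unfold av; rw [Finset.sum_comm, Finset.sum_div]
theorem av_nonneg {F : Ω → ℝ} (h : ∀ x, 0 ≤ F x) : 0 ≤ av F := by
  unfold av; exact div_nonneg (Finset.sum_nonneg fun x _ => h x) (by positivity)
theorem av_const [Nonempty Ω] (a : ℝ) : av (fun _ : Ω => a) = a := by
  unfold av; simp
theorem av_le_one {F : Ω → ℝ} [Nonempty Ω] (h : ∀ x, F x ≤ 1) : av F ≤ 1 := by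
  rw [← av_const (Ω := Ω) 1]; exact av_mono h
theorem av_abs (F : Ω → ℝ) : |av F| ≤ av (fun x => |F x|) := by
  unfold av; rw [abs_div, Nat.abs_cast]
  exact div_le_div_of_nonneg_right (Finset.abs_sum_le_sum_abs _ _) (by positivity)

theorem av_cs (F G : Ω → ℝ) :
    (av (fun x => F x * G x)) ^ 2 ≤ av (fun x => F x ^ 2) * av (fun x => G x ^ 2) := by
  unfold av
  have h := Finset.sum_mul_sq_le_sq_mul_sq Finset.univ F G
  rw [div_pow, div_mul_div_comm, ← sq]
  exact div_le_div_of_nonneg_right h (by positivity)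

variable {β : Type}

noncomputable def ce (q : Ω → β) (F : Ω → ℝ) (x : Ω) : ℝ :=
  (∑ y, F y * ind (q y = q x)) / (∑ y, ind (q y = q x))

theorem cell_pos (q : Ω → β) (x : Ω) : 0 < ∑ y, ind (q y = q x) := by
  have h : ind (q x = q x) ≤ ∑ y, ind (q y = q x) :=
    Finset.single_le_sum (f := fun y => ind (q y = q x)) (fun y _ => ind_nonneg _) (Finset.mem_univ x)
  rw [ind_pos rfl] at h; linarith

theorem ce_congr (q : Ω → β) (F : Ω → ℝ) {x y : Ω} (h : q x = q y) : ce q F x = ce q F y := by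
  unfold ce; rw [h]

/-- the cell average, in multiplied form -/
theorem ce_cell (q : Ω → β) (F : Ω → ℝ) (x : Ω) :
    av (fun y => F y * ind (q y = q x)) = ce q F x * av (fun y => ind (q y = q x)) := by
  unfold av ce
  have := (cell_pos q x).ne'
  field_simp

theorem ce_adj (q : Ω → β) (F w : Ω → ℝ) (hw : ∀ x y, q x = q y → w x = w y) :
    av (fun x => ce q F x * w x) = av (fun x => F x * w x) := by
  unfold av
  congr 1
  have h1 : ∀ x, ce q F x * w x
      = ∑ y, F y * (ind (q y = q x) * (w y / ∑ z, ind (q z = q y))) := by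
    intro x
    unfold ce
    rw [Finset.sum_div, Finset.sum_mul]
    refine Finset.sum_congr rfl fun y _ => ?_
    by_cases h : q y = q x
    · rw [ind_pos h, h, hw y x h]; ring
    · rw [ind_neg h]; ring
  simp_rw [h1]
  rw [Finset.sum_comm]
  refine Finset.sum_congr rfl fun y _ => ?_
  rw [← Finset.mul_sum, ← Finset.sum_mul]
  have h2 : ∑ x, ind (q y = q x) = ∑ z, ind (q z = q y) :=
    Finset.sum_congr rfl fun z _ => ind_congr eq_comm
  rw [h2, mul_div_cancel₀ _ (cell_pos q y).ne']

theorem ce_nonneg (q : Ω → β) {F : Ω → ℝ} (h : ∀ x, 0 ≤ F x) (x : Ω) : 0 ≤ ce q F x :=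
  div_nonneg (Finset.sum_nonneg fun y _ => mul_nonneg (h y) (ind_nonneg _)) (cell_pos q x).le

theorem ce_le_one (q : Ω → β) {F : Ω → ℝ} (h : ∀ x, F x ≤ 1) (x : Ω) : ce q F x ≤ 1 := by
  unfold ce
  rw [div_le_one (cell_pos q x)]
  exact Finset.sum_le_sum fun y _ => mul_le_of_le_one_left (ind_nonneg _) (h y)

noncomputable def en (q : Ω → β) (F : Ω → ℝ) : ℝ := av (fun x => ce q F x ^ 2)

theorem en_le_one [Nonempty Ω] (q : Ω → β) {F : Ω → ℝ} (h0 : ∀ x, 0 ≤ F x) (h : ∀ x, F x ≤ 1) :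
    en q F ≤ 1 :=
  av_le_one fun x => pow_le_one₀ (ce_nonneg q h0 x) (ce_le_one q h x)

theorem en_nonneg (q : Ω → β) (F : Ω → ℝ) : 0 ≤ en q F := av_nonneg fun x => sq_nonneg _

theorem en_diff {β' : Type} (q : Ω → β) (q' : Ω → β') (hq : ∀ x y, q' x = q' y → q x = q y)
    (F : Ω → ℝ) : av (fun x => (ce q' F x - ce q F x) ^ 2) = en q' F - en q F := by
  have h1 : av (fun x => ce q' F x * ce q F x) = av (fun x => F x * ce q F x) :=
    ce_adj q' F _ fun x y h => ce_congr q F (hq x y h)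
  have h2 : av (fun x => ce q F x * ce q F x) = av (fun x => F x * ce q F x) :=
    ce_adj q F _ fun x y h => ce_congr q F h
  have h3 : (fun x => (ce q' F x - ce q F x) ^ 2)
      = fun x => (ce q' F x ^ 2 - 2 * (ce q' F x * ce q F x)) + ce q F x * ce q F x := by
    funext x; ring
  rw [h3, av_add, av_sub, av_smul, h1, h2]
  have h4 : en q F = av (fun x => F x * ce q F x) := by
    rw [← h2]; unfold en; congr 1; funext x; ring
  rw [h4]; unfold en; ring

theorem en_incr [Nonempty Ω] {β' : Type} (q : Ω → β) (q' : Ω → β')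
    (hq : ∀ x y, q' x = q' y → q x = q y)
    (F T : Ω → ℝ) (hT : ∀ x y, q' x = q' y → T x = T y) (h0 : ∀ x, 0 ≤ T x) (h1 : ∀ x, T x ≤ 1) :
    (av (fun x => (F x - ce q F x) * T x)) ^ 2 ≤ en q' F - en q F := by
  have e1 : av (fun x => (F x - ce q F x) * T x) = av (fun x => (ce q' F x - ce q F x) * T x) := by
    simp_rw [sub_mul]
    rw [av_sub, av_sub, ce_adj q' F T hT]
  rw [e1, ← en_diff q q' hq F]
  refine (av_cs _ _).trans ?_
  refine mul_le_of_le_one_right (av_nonneg fun x => sq_nonneg _) ?_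
  exact av_le_one fun x => pow_le_one₀ (h0 x) (h1 x)

/-- points where the conditional density is small carry little mass -/
theorem bad_small [Nonempty Ω] (q : Ω → β) (F : Ω → ℝ) (η : ℝ) (hη : 0 ≤ η) :
    av (fun x => F x * ind (ce q F x < η)) ≤ η := by
  rw [← ce_adj q F (fun x => ind (ce q F x < η)) (fun x y h => by rw [ce_congr q F h])]
  refine le_trans (av_mono (G := fun _ => η) fun x => ?_) (av_const (Ω := Ω) η).le
  by_cases h : ce q F x < η
  · rw [ind_pos h]; linarith
  · rw [ind_neg h]; simpa using hη

theorem ce_av (q : Ω → β) (F : Ω → ℝ) : av (ce q F) = av F := by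
  simpa using ce_adj q F (fun _ => 1) (fun _ _ _ => rfl)

/-- Markov -/
theorem bad_markov (q : Ω → β) (F : Ω → ℝ) (h0 : ∀ x, 0 ≤ F x) (τ : ℝ) (hτ : 0 < τ) :
    av (fun x => ind (τ < ce q F x)) ≤ av F / τ := by
  rw [← ce_av q F, div_eq_inv_mul, ← av_smul]
  refine av_mono fun x => ?_
  by_cases h : τ < ce q F x
  · rw [ind_pos h, ← div_eq_inv_mul, le_div_iff₀ hτ]; linarith
  · rw [ind_neg h]; exact mul_nonneg (inv_nonneg.2 hτ.le) (ce_nonneg q h0 x)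

/-- small cells carry little mass -/
theorem bad_cell (q : Ω → ℕ) (L : ℕ) (hL : ∀ x, q x < L) (η : ℝ) (hη : 0 ≤ η) :
    av (fun x => ind (av (fun y => ind (q y = q x)) < η / (L + 1))) ≤ η := by
  have h1 : ∀ x, ind (av (fun y => ind (q y = q x)) < η / (L + 1)) =
      ∑ a ∈ Finset.range L, ind (q x = a) * ind (av (fun y => ind (q y = a)) < η / (L + 1)) := by
    intro x
    rw [Finset.sum_eq_single (q x)]
    · rw [ind_pos rfl, one_mul]
    · intro a _ ha; rw [ind_neg (Ne.symm ha), zero_mul]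
    · intro h; exact absurd (Finset.mem_range.2 (hL x)) h
  simp_rw [h1]
  rw [av_sum]
  have h2 : ∀ a ∈ Finset.range L,
      av (fun x => ind (q x = a) * ind (av (fun y => ind (q y = a)) < η / (L + 1))) ≤ η / (L + 1) := by
    intro a _
    by_cases h : av (fun y => ind (q y = a)) < η / (L + 1)
    · rw [ind_pos h]; simp only [mul_one]; exact h.le
    · rw [ind_neg h]; simp only [mul_zero]
      have : av (fun _ : Ω => (0:ℝ)) = 0 := by unfold av; simp
      rw [this]; positivity
  refine (Finset.sum_le_sum h2).trans ?_
  rw [Finset.sum_const, Finset.card_range, nsmul_eq_mul, mul_div_assoc', div_le_iff₀ (by positivity)]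
  nlinarith

end basics

section regularity

variable {Ω κ ι : Type} [Fintype Ω] [Fintype κ]

def jt (A : Finset ι) (c : ι → Ω → ℕ) (x : Ω) : A → ℕ := fun s => c s x

theorem jt_iff (A : Finset ι) (c : ι → Ω → ℕ) (x y : Ω) :
    jt A c x = jt A c y ↔ ∀ s ∈ A, c s x = c s y := by
  constructor
  · intro h s hs; exact congrFun h ⟨s, hs⟩
  · intro h; funext s; exact h s s.2

def Adm (r : ι → Ω → Ω → Prop) (c : ι → Ω → ℕ) : Prop := ∀ s x y, r s x y → c s x = c s y

def Refi (c c' : ι → Ω → ℕ) : Prop := ∀ s x y, c' s x = c' s y → c s x = c s y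

def PR (r : ι → Ω → Ω → Prop) (S : κ → Finset ι) (f : κ → Ω → ℝ) (c : ι → Ω → ℕ) (δ : ℝ) : Prop :=
  ∀ k, ∀ U : ι → Ω → Prop, (∀ s x y, r s x y → (U s x ↔ U s y)) →
    |av (fun x => (f k x - ce (jt (S k) c) (f k) x) * ind (∀ s ∈ S k, U s x))| ≤ δ

noncomputable def ent (S : κ → Finset ι) (f : κ → Ω → ℝ) (c : ι → Ω → ℕ) : ℝ :=
  ∑ k, en (jt (S k) c) (f k)

theorem ent_le [Nonempty Ω] (S : κ → Finset ι) (f : κ → Ω → ℝ) (c : ι → Ω → ℕ)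
    (h0 : ∀ k x, 0 ≤ f k x) (h1 : ∀ k x, f k x ≤ 1) : ent S f c ≤ Fintype.card κ := by
  unfold ent
  refine (Finset.sum_le_sum fun k _ => en_le_one _ (h0 k) (h1 k)).trans ?_
  simp

theorem jt_refi (A : Finset ι) {c c' : ι → Ω → ℕ} (h : Refi c c') (x y : Ω)
    (hxy : jt A c' x = jt A c' y) : jt A c x = jt A c y := by
  rw [jt_iff] at *
  exact fun s hs => h s x y (hxy s hs)

theorem en_mono {c c' : ι → Ω → ℕ} (h : Refi c c') (A : Finset ι) (F : Ω → ℝ) :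
    en (jt A c) F ≤ en (jt A c') F := by
  have := en_diff (jt A c) (jt A c') (jt_refi A h) F
  have h2 : 0 ≤ av (fun x => (ce (jt A c') F x - ce (jt A c) F x) ^ 2) :=
    av_nonneg fun x => sq_nonneg _
  linarith

open Classical in
theorem refine_step [Nonempty Ω] (r : ι → Ω → Ω → Prop) (S : κ → Finset ι) (f : κ → Ω → ℝ)
    (c : ι → Ω → ℕ) (δ : ℝ) (hδ : 0 < δ) (M : ℕ) (hM : ∀ s x, c s x < M) (hA : Adm r c)
    (hn : ¬ PR r S f c δ) :
    ∃ c', Adm r c' ∧ Refi c c' ∧ (∀ s x, c' s x < M * 2) ∧ ent S f c + δ ^ 2 ≤ ent S f c' := by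
  unfold PR at hn
  push Not at hn
  obtain ⟨k, U, hU, hk⟩ := hn
  refine ⟨fun s x => 2 * c s x + if U s x then 1 else 0, ?_, ?_, ?_, ?_⟩
  · intro s x y h
    simp only [hA s x y h, hU s x y h]
  · intro s x y h
    simp only at h
    split_ifs at h <;> omega
  · intro s x
    have := hM s x
    simp only
    split_ifs <;> omega
  · set c' : ι → Ω → ℕ := fun s x => 2 * c s x + if U s x then 1 else 0 with hc'
    have hr : Refi c c' := by
      intro s x y h
      simp only [hc'] at h
      split_ifs at h <;> omega
    have hk2 : δ ^ 2 ≤ en (jt (S k) c') (f k) - en (jt (S k) c) (f k) := by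
      refine le_trans ?_ (en_incr (jt (S k) c) (jt (S k) c') (jt_refi _ hr) (f k)
        (fun x => ind (∀ s ∈ S k, U s x)) ?_ (fun x => ind_nonneg _) (fun x => ind_le_one _))
      · rw [← sq_abs (av _)]
        exact pow_le_pow_left₀ hδ.le hk.le 2
      · intro x y h
        rw [jt_iff] at h
        apply ind_congr
        refine forall₂_congr fun s hs => ?_
        have := h s hs
        simp only [hc'] at this
        split_ifs at this with h1 h2 h2
        · simp [h1, h2]
        · omega
        · omega
        · simp [h1, h2]
    unfold ent
    rw [← Finset.add_sum_erase _ _ (Finset.mem_univ k),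
      ← Finset.add_sum_erase (a := k) Finset.univ (fun k => en (jt (S k) c') (f k)) (Finset.mem_univ k)]
    have := Finset.sum_le_sum (s := Finset.univ.erase k)
      (fun j _ => en_mono hr (S j) (f j))
    linarith

theorem weak_reg [Nonempty Ω] (r : ι → Ω → Ω → Prop) (S : κ → Finset ι) (f : κ → Ω → ℝ)
    (h0 : ∀ k x, 0 ≤ f k x) (h1 : ∀ k x, f k x ≤ 1) (δ : ℝ) (hδ : 0 < δ) (t : ℕ) :
    ∀ (c : ι → Ω → ℕ) (M : ℕ), (∀ s x, c s x < M) → Adm r c →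
      (Fintype.card κ : ℝ) ≤ ent S f c + t * δ ^ 2 →
      ∃ c', Adm r c' ∧ Refi c c' ∧ (∀ s x, c' s x < M * 2 ^ t) ∧ PR r S f c' δ := by
  induction t with
  | zero =>
    intro c M hM hA hE
    by_cases hp : PR r S f c δ
    · exact ⟨c, hA, fun s x y h => h, by simpa using hM, hp⟩
    · obtain ⟨c', -, -, -, h⟩ := refine_step r S f c δ hδ M hM hA hp
      have := ent_le S f c' h0 h1
      have : 0 < δ ^ 2 := by positivity
      push_cast at hE
      linarith
  | succ t ih =>
    intro c M hM hA hE
    by_cases hp : PR r S f c δ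
    · refine ⟨c, hA, fun s x y h => h, fun s x => (hM s x).trans_le ?_, hp⟩
      exact Nat.le_mul_of_pos_right _ (by positivity)
    · obtain ⟨c', h2, h3, h4, h5⟩ := refine_step r S f c δ hδ M hM hA hp
      push_cast at hE
      obtain ⟨c'', g1, g2, g3, g4⟩ := ih c' (M * 2) h4 h2 (by linarith)
      refine ⟨c'', g1, fun s x y h => h3 s x y (g2 s x y h), fun s x => ?_, g4⟩
      have := g3 s x
      rwa [pow_succ', ← mul_assoc]

theorem strong_aux (κ : Type) [Fintype κ] (ε : ℝ) (hε : 0 < ε) (δ : ℕ → ℝ)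
    (hδ : ∀ M, 0 < δ M) (t : ℕ) : ∀ M : ℕ, ∃ B : ℕ, ∀ (Ω ι : Type) [Fintype Ω] [Nonempty Ω]
      (r : ι → Ω → Ω → Prop) (S : κ → Finset ι) (f : κ → Ω → ℝ)
      (_ : ∀ k x, 0 ≤ f k x) (_ : ∀ k x, f k x ≤ 1) (c : ι → Ω → ℕ), (∀ s x, c s x < M) →
      Adm r c → (Fintype.card κ : ℝ) ≤ ent S f c + t * ε →
      ∃ (c c' : ι → Ω → ℕ) (M : ℕ), M ≤ B ∧ (∀ s x, c s x < M) ∧ Adm r c ∧ Adm r c' ∧ Refi c c' ∧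
        PR r S f c' (δ M) ∧ ∀ k, av (fun x => (ce (jt (S k) c') (f k) x - ce (jt (S k) c) (f k) x) ^ 2) ≤ ε := by
  have key : ∀ M : ℕ, ∃ n : ℕ, ∀ (Ω ι : Type) [Fintype Ω] [Nonempty Ω]
      (r : ι → Ω → Ω → Prop) (S : κ → Finset ι) (f : κ → Ω → ℝ)
      (_ : ∀ k x, 0 ≤ f k x) (_ : ∀ k x, f k x ≤ 1) (c : ι → Ω → ℕ), (∀ s x, c s x < M) →
      Adm r c → ∃ c', Adm r c' ∧ Refi c c' ∧ (∀ s x, c' s x < M * 2 ^ n) ∧ PR r S f c' (δ M) := by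
    intro M
    obtain ⟨n, hn⟩ := exists_nat_ge ((Fintype.card κ : ℝ) / (δ M) ^ 2)
    refine ⟨n, ?_⟩
    intro Ω ι _ _ r S f h0 h1 c hM hA
    refine weak_reg r S f h0 h1 (δ M) (hδ M) n c M hM hA ?_
    have h2 := hδ M
    rw [div_le_iff₀ (by positivity)] at hn
    have : 0 ≤ ent S f c := Finset.sum_nonneg fun k _ => en_nonneg _ _
    linarith
  have diff : ∀ (Ω ι : Type) [Fintype Ω] [Nonempty Ω] (S : κ → Finset ι) (f : κ → Ω → ℝ)
      (c c' : ι → Ω → ℕ), Refi c c' → ent S f c' ≤ ent S f c + ε →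
      ∀ k, av (fun x => (ce (jt (S k) c') (f k) x - ce (jt (S k) c) (f k) x) ^ 2) ≤ ε := by
    intro Ω ι _ _ S f c c' hr he k
    rw [en_diff _ _ (jt_refi _ hr)]
    classical
    unfold ent at he
    rw [← Finset.add_sum_erase _ _ (Finset.mem_univ k),
      ← Finset.add_sum_erase (a := k) Finset.univ (fun k => en (jt (S k) c) (f k)) (Finset.mem_univ k)] at he
    have := Finset.sum_le_sum (s := Finset.univ.erase k)
      (fun j _ => en_mono hr (S j) (f j))
    linarith
  induction t with
  | zero =>
    intro M
    obtain ⟨n, hn⟩ := key M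
    refine ⟨M, ?_⟩
    intro Ω ι _ _ r S f h0 h1 c hM hA hE
    obtain ⟨c', a1, a2, a3, a4⟩ := hn Ω ι r S f h0 h1 c hM hA
    refine ⟨c, c', M, le_rfl, hM, hA, a1, a2, a4, diff Ω ι S f c c' a2 ?_⟩
    have := ent_le S f c' h0 h1
    push_cast at hE
    linarith
  | succ t ih =>
    intro M
    obtain ⟨n, hn⟩ := key M
    obtain ⟨B, hB⟩ := ih (M * 2 ^ n)
    refine ⟨max M B, ?_⟩
    intro Ω ι _ _ r S f h0 h1 c hM hA hE
    obtain ⟨c', a1, a2, a3, a4⟩ := hn Ω ι r S f h0 h1 c hM hA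
    by_cases he : ent S f c' ≤ ent S f c + ε
    · exact ⟨c, c', M, le_max_left _ _, hM, hA, a1, a2, a4, diff Ω ι S f c c' a2 he⟩
    · push_cast at hE
      obtain ⟨d, d', M', g, g'⟩ := hB Ω ι r S f h0 h1 c' a3 a1 (by push Not at he; linarith)
      exact ⟨d, d', M', g.trans (le_max_right _ _), g'⟩

theorem strong_reg (κ : Type) [Fintype κ] (ε : ℝ) (hε : 0 < ε) (δ : ℕ → ℝ)
    (hδ : ∀ M, 0 < δ M) : ∃ B : ℕ, ∀ (Ω ι : Type) [Fintype Ω] [Nonempty Ω]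
      (r : ι → Ω → Ω → Prop) (S : κ → Finset ι) (f : κ → Ω → ℝ)
      (_ : ∀ k x, 0 ≤ f k x) (_ : ∀ k x, f k x ≤ 1),
      ∃ (c c' : ι → Ω → ℕ) (M : ℕ), M ≤ B ∧ (∀ s x, c s x < M) ∧ Adm r c ∧ Adm r c' ∧ Refi c c' ∧
        PR r S f c' (δ M) ∧ ∀ k, av (fun x => (ce (jt (S k) c') (f k) x - ce (jt (S k) c) (f k) x) ^ 2) ≤ ε := by
  obtain ⟨t, ht⟩ := exists_nat_ge ((Fintype.card κ : ℝ) / ε)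
  obtain ⟨B, hB⟩ := strong_aux κ ε hε δ hδ t 1
  refine ⟨B, ?_⟩
  intro Ω ι _ _ r S f h0 h1
  refine hB Ω ι r S f h0 h1 (fun _ _ => 0) (fun _ _ => by norm_num) (fun _ _ _ _ => rfl) ?_
  rw [div_le_iff₀ hε] at ht
  have : 0 ≤ ent S f (fun _ _ => 0) := Finset.sum_nonneg fun k _ => en_nonneg _ _
  linarith

end regularity

section product

variable {V : Type} [Fintype V]

def Dep {V γ : Type} (s : Finset (Fin 4)) (F : (Fin 4 → V) → γ) : Prop :=
  ∀ x y : Fin 4 → V, (∀ i ∈ s, x i = y i) → F x = F y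

def mix {V : Type} (s : Finset (Fin 4)) (x z : Fin 4 → V) : Fin 4 → V :=
  fun i => if i ∈ s then x i else z i

theorem av_mix [Nonempty V] (s : Finset (Fin 4)) (F : (Fin 4 → V) → ℝ) :
    av F = av (fun z : Fin 4 → V => av (fun x => F (mix s x z))) := by
  classical
  have h : ∑ p : (Fin 4 → V) × (Fin 4 → V), F (mix s p.2 p.1)
      = ∑ p : (Fin 4 → V) × (Fin 4 → V), F p.2 := by
    refine Finset.sum_nbij' (fun p => (mix s p.1 p.2, mix s p.2 p.1))
      (fun p => (mix s p.1 p.2, mix s p.2 p.1)) (by simp) (by simp) ?_ ?_ ?_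
    · rintro ⟨z, x⟩ _
      ext i <;> by_cases hi : i ∈ s <;> simp [mix, hi]
    · rintro ⟨z, x⟩ _
      ext i <;> by_cases hi : i ∈ s <;> simp [mix, hi]
    · rintro ⟨z, x⟩ _
      rfl
  rw [Fintype.sum_prod_type, Fintype.sum_prod_type] at h
  simp only at h
  unfold av
  rw [← Finset.sum_div, h]
  rw [Finset.sum_const, Finset.card_univ, nsmul_eq_mul]
  have : (Fintype.card (Fin 4 → V) : ℝ) ≠ 0 := by
    exact_mod_cast Fintype.card_ne_zero
  field_simp

theorem fix_le [Nonempty V] (s : Finset (Fin 4)) (p R : (Fin 4 → V) → ℝ) (hp : Dep s p) (δ : ℝ)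
    (h : ∀ z, |av (fun x => p x * R (mix s x z))| ≤ δ) : |av (fun x => p x * R x)| ≤ δ := by
  rw [av_mix s]
  have h2 : ∀ z x, p (mix s x z) = p x := fun z x => hp _ _ fun i hi => by simp [mix, hi]
  simp_rw [h2]
  refine (av_abs _).trans ?_
  refine (av_mono h).trans ?_
  rw [av_const]

theorem av_indep [Nonempty V] (s : Finset (Fin 4)) (F G : (Fin 4 → V) → ℝ) (hF : Dep s F)
    (hG : Dep sᶜ G) : av (fun x => F x * G x) = av F * av G := by
  rw [av_mix s]
  have h2 : ∀ z x, F (mix s x z) = F x := fun z x => hF _ _ fun i hi => by simp [mix, hi]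
  have h3 : ∀ z x, G (mix s x z) = G z := fun z x => hG _ _ fun i hi => by
    simp [mix, Finset.mem_compl.1 hi]
  simp_rw [h2, h3]
  have h4 : ∀ z, av (fun x => F x * G z) = av F * G z := by
    intro z
    simp_rw [mul_comm _ (G z)]
    exact av_smul _ _
  simp_rw [h4]
  exact av_smul _ _

theorem Dep.mono {γ : Type} {s t : Finset (Fin 4)} (h : s ⊆ t) {F : (Fin 4 → V) → γ} (hF : Dep s F) :
    Dep t F := fun x y hxy => hF x y fun i hi => hxy i (h hi)

theorem Dep.mixd {γ : Type} {s t u : Finset (Fin 4)} {F : (Fin 4 → V) → γ} (hF : Dep u F)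
    (h : u ∩ s ⊆ t) (z : Fin 4 → V) : Dep t (fun x => F (mix s x z)) := by
  intro x y hxy
  refine hF _ _ fun i hi => ?_
  by_cases his : i ∈ s
  · simp [mix, his, hxy i (h (Finset.mem_inter.2 ⟨hi, his⟩))]
  · simp [mix, his]

theorem dep_jt (s : Finset (Fin 4)) {ι : Type} (A : Finset ι) (c : ι → (Fin 4 → V) → ℕ)
    (h : ∀ a ∈ A, Dep s (c a)) : Dep s (jt A c) := by
  intro x y hxy
  rw [jt_iff]
  exact fun a ha => h a ha x y hxy

theorem dep_ce {β : Type} (s : Finset (Fin 4)) (q : (Fin 4 → V) → β) (hq : Dep s q)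
    (F : (Fin 4 → V) → ℝ) : Dep s (ce q F) :=
  fun x y hxy => ce_congr q F (hq x y hxy)

/-- pair regularity -/
theorem pair_step [Nonempty V] (s : Finset (Fin 4)) (hs : s.card = 2) (A : (Fin 4 → V) → Prop)
    (hA : Dep s A) (b b' : Fin 4 → (Fin 4 → V) → ℕ) (hb : ∀ i, Dep {i} (b i))
    (hb' : ∀ i, Dep {i} (b' i)) (x0 : Fin 4 → V) (γ δ : ℝ)
    (hPR : ∀ U : Fin 4 → (Fin 4 → V) → Prop, (∀ i x y, x i = y i → (U i x ↔ U i y)) →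
      |av (fun x => (ind (A x) - ce (jt s b') (fun x => ind (A x)) x) * ind (∀ i ∈ s, U i x))| ≤ δ)
    (hL : ce (jt s b) (fun x => |ce (jt s b') (fun x => ind (A x)) x
      - ce (jt s b) (fun x => ind (A x)) x|) x0 ≤ γ)
    (Z : Fin 4 → (Fin 4 → V) → Prop) (hZ : ∀ i, Dep {i}ᶜ (Z i))
    (hZB : ∀ x, (∀ i ∈ s, Z i x) → ∀ i, b i x = b i x0) :
    |av (fun x => ind (A x ∧ ∀ i ∈ s, Z i x))
      - ce (jt s b) (fun x => ind (A x)) x0 * av (fun x => ind (∀ i ∈ s, Z i x))|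
      ≤ γ * av (fun x => ind (∀ i, b i x = b i x0)) + δ := by
  set a : (Fin 4 → V) → ℝ := fun x => ind (A x) with ha
  set Y : (Fin 4 → V) → Prop := fun x => ∀ i ∈ s, Z i x with hY
  have djt : Dep s (jt s b) := dep_jt s s b fun i hi => (hb i).mono (by simpa using hi)
  have djt' : Dep s (jt s b') := dep_jt s s b' fun i hi => (hb' i).mono (by simpa using hi)
  have da : Dep s a := fun x y h => by simp only [ha]; rw [hA x y h]
  have e1 : av (fun x => ind (A x ∧ Y x)) - ce (jt s b) a x0 * av (fun x => ind (Y x))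
      = av (fun x => (a x - ce (jt s b') a x) * ind (Y x))
        + av (fun x => (ce (jt s b') a x - ce (jt s b) a x) * ind (Y x)) := by
    rw [← av_smul, ← av_sub, ← av_add]
    congr 1; funext x
    rw [ind_and]
    by_cases h : Y x
    · have : ce (jt s b) a x = ce (jt s b) a x0 := by
        apply ce_congr; rw [jt_iff]; exact fun i _ => hZB x h i
      rw [this]; ring
    · rw [ind_neg h]; ring
  have e2 : |av (fun x => (a x - ce (jt s b') a x) * ind (Y x))| ≤ δ := by
    refine fix_le s _ _ ?_ δ ?_
    · intro x y h
      simp only [da x y h, dep_ce s _ djt' a x y h]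
    · intro z
      obtain ⟨i, j, hij, rfl⟩ := Finset.card_eq_two.1 hs
      have := hPR (fun k x => if k = i then Z j (mix {i, j} x z) else
        if k = j then Z i (mix {i, j} x z) else True) ?_
      · refine le_trans (le_of_eq ?_) this
        congr 2; funext x; congr 1
        apply ind_congr
        simp [hY, hij.symm, and_comm]
      · intro k x y hk
        split_ifs with h1 h2
        · have := (hZ j).mixd (s := {i, j}) (t := {i}) (by
            intro l; simp <;> tauto) z x y (by simpa [h1] using hk)
          simp only at this; rw [this]
        · have := (hZ i).mixd (s := {i, j}) (t := {j}) (by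
            intro l; simp <;> tauto) z x y (by simpa [h2] using hk)
          simp only at this; rw [this]
        · rfl
  have e3 : |av (fun x => (ce (jt s b') a x - ce (jt s b) a x) * ind (Y x))|
      ≤ γ * av (fun x => ind (∀ i, b i x = b i x0)) := by
    refine (av_abs _).trans ?_
    have i1 : ∀ x, ind (∀ i, b i x = b i x0)
        = ind (jt s b x = jt s b x0) * ind (∀ i ∈ sᶜ, b i x = b i x0) := by
      intro x
      rw [← ind_and]
      apply ind_congr
      rw [jt_iff]
      constructor
      · exact fun h => ⟨fun i _ => h i, fun i _ => h i⟩
      · rintro ⟨h1, h2⟩ i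
        by_cases hi : i ∈ s
        · exact h1 i hi
        · exact h2 i (Finset.mem_compl.2 hi)
    have dr : Dep sᶜ (fun x => ind (∀ i ∈ sᶜ, b i x = b i x0)) := by
      intro x y h
      apply ind_congr
      refine forall₂_congr fun i hi => ?_
      rw [(hb i).mono (t := sᶜ) (by simpa using hi) x y h]
    have dj2 : Dep s (fun x => ind (jt s b x = jt s b x0)) := by
      intro x y h
      simp only [djt x y h]
    have i2 : av (fun x => |(ce (jt s b') a x - ce (jt s b) a x) * ind (Y x)|)
        ≤ av (fun x => (|ce (jt s b') a x - ce (jt s b) a x| * ind (jt s b x = jt s b x0))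
          * ind (∀ i ∈ sᶜ, b i x = b i x0)) := by
      refine av_mono fun x => ?_
      rw [abs_mul, abs_of_nonneg (ind_nonneg _), mul_assoc, ← i1]
      exact mul_le_mul_of_nonneg_left (ind_mono (hZB x)) (abs_nonneg _)
    refine i2.trans ?_
    simp_rw [i1]
    rw [av_indep s _ _ ?_ dr, av_indep s _ _ dj2 dr, ce_cell, ← mul_assoc]
    · refine mul_le_mul_of_nonneg_right ?_ (av_nonneg fun x => ind_nonneg _)
      exact mul_le_mul_of_nonneg_right hL (av_nonneg fun x => ind_nonneg _)
    · intro x y h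
      have h1 := dj2 x y h
      simp only at h1
      simp only [h1, dep_ce s _ djt a x y h, dep_ce s _ djt' a x y h]
  rw [e1]
  refine (abs_add_le _ _).trans ?_
  linarith

def prs : Finset (Finset (Fin 4)) := Finset.univ.filter (fun s => s.card = 2)
def fc (e : Fin 4) : Finset (Finset (Fin 4)) := prs.filter (fun s => e ∉ s)

theorem mem_prs {s : Finset (Fin 4)} : s ∈ prs ↔ s.card = 2 := by simp [prs]
theorem mem_fc {e : Fin 4} {s : Finset (Fin 4)} : s ∈ fc e ↔ s.card = 2 ∧ e ∉ s := by
  simp [fc, mem_prs]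

theorem count_pairs [Nonempty V] (A : Finset (Fin 4) → (Fin 4 → V) → Prop) (hA : ∀ s, Dep s (A s))
    (b : Fin 4 → (Fin 4 → V) → ℕ) (hb : ∀ i, Dep {i} (b i)) (x0 : Fin 4 → V)
    (d : Finset (Fin 4) → ℝ) (hd0 : ∀ s, 0 ≤ d s) (hd1 : ∀ s, d s ≤ 1) (err : ℝ)
    (hstep : ∀ s ∈ prs, ∀ Z : Fin 4 → (Fin 4 → V) → Prop, (∀ i, Dep {i}ᶜ (Z i)) →
      (∀ x, (∀ i ∈ s, Z i x) → ∀ i, b i x = b i x0) →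
      |av (fun x => ind (A s x ∧ ∀ i ∈ s, Z i x)) - d s * av (fun x => ind (∀ i ∈ s, Z i x))| ≤ err)
    (J0 : Finset (Finset (Fin 4))) (hJ0 : J0 ⊆ prs) (W : (Fin 4 → V) → Prop)
    (J : Finset (Finset (Fin 4))) (hJ : J ⊆ prs) (hdis : Disjoint J0 J)
    (hW : ∀ s ∈ J, ∃ e ∈ s, Dep {e}ᶜ W) :
    |av (fun x => ind (W x ∧ (∀ i, b i x = b i x0) ∧ ∀ s ∈ J0 ∪ J, A s x))
      - (∏ s ∈ J, d s) * av (fun x => ind (W x ∧ (∀ i, b i x = b i x0) ∧ ∀ s ∈ J0, A s x))|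
      ≤ J.card * err := by
  classical
  induction J using Finset.induction_on with
  | empty => simp
  | insert s J hsJ ih =>
    have hs : s ∈ prs := hJ (Finset.mem_insert_self _ _)
    have hs2 := mem_prs.1 hs
    have hsJ0 : s ∉ J0 := fun h => Finset.disjoint_left.1 hdis h (Finset.mem_insert_self _ _)
    have ih' := ih (fun t ht => hJ (Finset.mem_insert_of_mem ht))
      (Finset.disjoint_of_subset_right (Finset.subset_insert _ _) hdis)
      (fun t ht => hW t (Finset.mem_insert_of_mem ht))
    have hother : ∀ s' ∈ J0 ∪ J, ∃ i ∈ s, i ∉ s' := by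
      intro s' hs'
      by_contra! hcon
      have hc : s'.card = 2 := by
        rcases Finset.mem_union.1 hs' with h | h
        · exact mem_prs.1 (hJ0 h)
        · exact mem_prs.1 (hJ (Finset.mem_insert_of_mem h))
      have : s = s' := Finset.eq_of_subset_of_card_le hcon (by omega)
      subst this
      rcases Finset.mem_union.1 hs' with h | h
      · exact hsJ0 h
      · exact hsJ h
    obtain ⟨e, hes, heW⟩ := hW s (Finset.mem_insert_self _ _)
    set Y : (Fin 4 → V) → Prop :=
      fun x => W x ∧ (∀ i, b i x = b i x0) ∧ ∀ s ∈ J0 ∪ J, A s x with hY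
    let Z : Fin 4 → (Fin 4 → V) → Prop := fun i x =>
      (Dep {i}ᶜ W → W x) ∧ (∀ k, k ≠ i → b k x = b k x0) ∧ ∀ s' ∈ J0 ∪ J, i ∉ s' → A s' x
    have hZY : ∀ x, (∀ i ∈ s, Z i x) ↔ Y x := by
      intro x
      constructor
      · intro h
        refine ⟨(h e hes).1 heW, ?_, ?_⟩
        · intro k
          obtain ⟨i, his, hik⟩ := Finset.exists_mem_ne (by omega : 1 < s.card) k
          exact (h i his).2.1 k hik.symm
        · intro s' hs'
          obtain ⟨i, his, his'⟩ := hother s' hs'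
          exact (h i his).2.2 s' hs' his'
      · rintro ⟨h1, h2, h3⟩ i _
        exact ⟨fun _ => h1, fun k _ => h2 k, fun s' hs' _ => h3 s' hs'⟩
    have hZ : ∀ i, Dep {i}ᶜ (Z i) := by
      intro i x y h
      have h1 : (Dep {i}ᶜ W → W x) = (Dep {i}ᶜ W → W y) := by
        apply propext
        refine forall_congr' fun hD => ?_
        rw [hD x y h]
      have h2 : (∀ k, k ≠ i → b k x = b k x0) = (∀ k, k ≠ i → b k y = b k x0) := by
        apply propext
        refine forall₂_congr fun k hk => ?_
        rw [(hb k).mono (t := {i}ᶜ) (by simpa using Ne.symm hk) x y h]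
      have h3 : (∀ s' ∈ J0 ∪ J, i ∉ s' → A s' x) = (∀ s' ∈ J0 ∪ J, i ∉ s' → A s' y) := by
        apply propext
        refine forall₃_congr fun k hk hik => ?_
        rw [(hA k).mono (t := {i}ᶜ) (by
          intro l hl; simp; rintro rfl; exact hik hl) x y h]
      simp only [Z, h1, h2, h3]
    have key := hstep s hs Z hZ (fun x hx => ((hZY x).1 hx).2.1)
    simp_rw [hZY] at key
    have e1 : (fun x => ind (W x ∧ (∀ i, b i x = b i x0) ∧ ∀ s' ∈ J0 ∪ insert s J, A s' x))
        = fun x => ind (A s x ∧ Y x) := by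
      funext x
      apply ind_congr
      simp only [hY, Finset.union_insert, Finset.forall_mem_insert]
      tauto
    rw [e1, Finset.prod_insert hsJ, Finset.card_insert_of_notMem hsJ]
    push_cast
    have h4 : |d s * (av (fun x => ind (Y x)) - (∏ s ∈ J, d s) *
        av (fun x => ind (W x ∧ (∀ i, b i x = b i x0) ∧ ∀ s ∈ J0, A s x)))| ≤ J.card * err := by
      rw [abs_mul, abs_of_nonneg (hd0 s)]
      exact (mul_le_of_le_one_left (abs_nonneg _) (hd1 s)).trans ih'
    have h5 := abs_add_le (av (fun x => ind (A s x ∧ Y x)) - d s * av (fun x => ind (Y x)))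
      (d s * (av (fun x => ind (Y x)) - (∏ s ∈ J, d s) *
        av (fun x => ind (W x ∧ (∀ i, b i x = b i x0) ∧ ∀ s ∈ J0, A s x))))
    have h6 : (av (fun x => ind (A s x ∧ Y x)) - d s * av (fun x => ind (Y x))) +
      (d s * (av (fun x => ind (Y x)) - (∏ s ∈ J, d s) *
        av (fun x => ind (W x ∧ (∀ i, b i x = b i x0) ∧ ∀ s ∈ J0, A s x))))
      = av (fun x => ind (A s x ∧ Y x)) - d s * (∏ s ∈ J, d s) *
        av (fun x => ind (W x ∧ (∀ i, b i x = b i x0) ∧ ∀ s ∈ J0, A s x)) := by ring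
    rw [h6] at h5
    linarith

theorem compl_pair : ∀ e i : Fin 4, i ≠ e →
    ({e, i}ᶜ : Finset (Fin 4)).card = 2 ∧ e ∉ ({e, i}ᶜ : Finset (Fin 4)) := by
  decide

/-- pseudorandomness of a face against the other three faces -/
theorem face_step [Nonempty V] (e : Fin 4) (p : (Fin 4 → V) → ℝ) (hp : Dep {e}ᶜ p) (δ : ℝ)
    (hPR : ∀ U : Finset (Fin 4) → (Fin 4 → V) → Prop,
      (∀ s x y, (∀ i ∈ s, x i = y i) → (U s x ↔ U s y)) →
      |av (fun x => p x * ind (∀ s ∈ fc e, U s x))| ≤ δ)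
    (R : Fin 4 → (Fin 4 → V) → Prop) (hR : ∀ i, Dep {i}ᶜ (R i)) :
    |av (fun x => p x * ind (∀ i, i ≠ e → R i x))| ≤ δ := by
  refine fix_le {e}ᶜ p _ hp δ fun z => ?_
  have := hPR (fun s x => ∀ i, i ≠ e → s = {e, i}ᶜ → R i (mix {e}ᶜ x z)) ?_
  · refine le_trans (le_of_eq ?_) this
    congr 2; funext x; congr 1
    apply ind_congr
    constructor
    · intro h s _ i hi _
      exact h i hi
    · intro h i hi
      refine h {e, i}ᶜ ?_ i hi rfl
      rw [mem_fc]
      exact compl_pair e i hi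
  · intro s x y h
    refine forall₃_congr fun i hi hs => ?_
    have := (hR i).mixd (s := {e}ᶜ) (t := s) (by
      rw [hs]; intro l; simp <;> tauto) z x y h
    simp only at this
    rw [this]

end product

section removal

variable {V : Type} [Fintype V]

theorem prodB [Nonempty V] (b : Fin 4 → (Fin 4 → V) → ℕ) (hb : ∀ i, Dep {i} (b i)) (x0 : Fin 4 → V)
    (ζ : ℝ) (hζ : 0 ≤ ζ) (h : ∀ i, ζ ≤ av (fun x => ind (b i x = b i x0))) :
    ζ ^ 4 ≤ av (fun x => ind (∀ i, b i x = b i x0)) := by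
  have key : ∀ s : Finset (Fin 4), ζ ^ s.card ≤ av (fun x => ind (∀ i ∈ s, b i x = b i x0)) := by
    intro s
    induction s using Finset.induction_on with
    | empty =>
      have : (fun x : Fin 4 → V => ind (∀ i ∈ (∅ : Finset (Fin 4)), b i x = b i x0)) = fun _ => 1 := by
        funext x; exact ind_pos (by simp)
      rw [this, av_const]; simp
    | insert i s hi ih =>
      have : (fun x : Fin 4 → V => ind (∀ j ∈ insert i s, b j x = b j x0))
          = fun x => ind (b i x = b i x0) * ind (∀ j ∈ s, b j x = b j x0) := by
        funext x; rw [← ind_and]; apply ind_congr; simp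
      rw [this, av_indep {i}, Finset.card_insert_of_notMem hi, pow_succ']
      · exact mul_le_mul (h i) ih (by positivity) (av_nonneg fun _ => ind_nonneg _)
      · intro x y hxy
        simp only [hb i x y hxy]
      · intro x y hxy
        apply ind_congr
        refine forall₂_congr fun j hj => ?_
        rw [(hb j).mono (t := {i}ᶜ) (by simp; rintro rfl; exact hi hj) x y hxy]
  simpa using key Finset.univ

theorem card_fc : ∀ e, (fc e).card = 3 := by decide
theorem card_cofc : ∀ e, (prs.filter (fun s => ¬ e ∉ s)).card = 3 := by decide

theorem cell_count [Nonempty V] (A : Finset (Fin 4) → (Fin 4 → V) → Prop) (hA : ∀ s, Dep s (A s))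
    (b : Fin 4 → (Fin 4 → V) → ℕ) (hb : ∀ i, Dep {i} (b i)) (x0 : Fin 4 → V)
    (d : Finset (Fin 4) → ℝ) (hd0 : ∀ s, 0 ≤ d s) (hd1 : ∀ s, d s ≤ 1) (err : ℝ)
    (herr0 : 0 ≤ err)
    (hstep : ∀ s ∈ prs, ∀ Z : Fin 4 → (Fin 4 → V) → Prop, (∀ i, Dep {i}ᶜ (Z i)) →
      (∀ x, (∀ i ∈ s, Z i x) → ∀ i, b i x = b i x0) →
      |av (fun x => ind (A s x ∧ ∀ i ∈ s, Z i x)) - d s * av (fun x => ind (∀ i ∈ s, Z i x))| ≤ err)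
    (θ : ℝ) (hθ : 0 ≤ θ) (hd : ∀ s ∈ prs, θ ≤ d s)
    (herr : err ≤ θ ^ 6 / 120 * av (fun x => ind (∀ i, b i x = b i x0)))
    (W : Fin 4 → (Fin 4 → V) → Prop) (hW : ∀ e, Dep {e}ᶜ (W e))
    (hWs : ∀ e, av (fun x => ind (W e x ∧ (∀ i ∈ ({e}ᶜ : Finset (Fin 4)), b i x = b i x0) ∧
        ∀ s ∈ fc e, A s x))
      ≤ 1 / 8 * av (fun x => ind ((∀ i ∈ ({e}ᶜ : Finset (Fin 4)), b i x = b i x0) ∧ ∀ s ∈ fc e, A s x))) :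
    θ ^ 6 / 4 * av (fun x => ind (∀ i, b i x = b i x0)) ≤
      av (fun x => ind (∀ e, ((∀ i ∈ ({e}ᶜ : Finset (Fin 4)), b i x = b i x0) ∧ ∀ s ∈ fc e, A s x)
        ∧ ¬ W e x)) := by
  classical
  have cnt := count_pairs A hA b hb x0 d hd0 hd1 err hstep
  have cprs : prs.card = 6 := by decide
  set PB := av (fun x => ind (∀ i, b i x = b i x0)) with hPB
  set PQ := av (fun x => ind ((∀ i, b i x = b i x0) ∧ ∀ s ∈ prs, A s x)) with hPQ
  -- total count
  have c1 : |PQ - (∏ s ∈ prs, d s) * PB| ≤ 6 * err := by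
    have := cnt ∅ (by simp) (fun _ => True) prs (le_refl _) (by simp) (by
      intro s hs
      have : s.Nonempty := by rw [← Finset.card_pos, mem_prs.1 hs]; norm_num
      obtain ⟨e, he⟩ := this
      exact ⟨e, he, fun _ _ _ => rfl⟩)
    simp only [true_and, Finset.empty_union, cprs, Finset.notMem_empty, false_imp_iff,
      implies_true, and_true] at this
    exact_mod_cast this
  have hPd : θ ^ 6 ≤ ∏ s ∈ prs, d s := by
    rw [← cprs, ← Finset.prod_const]
    exact Finset.prod_le_prod (fun _ _ => hθ) hd
  have hPB0 : 0 ≤ PB := av_nonneg fun _ => ind_nonneg _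
  -- the W_e
  have c2 : ∀ e, av (fun x => ind (W e x ∧ (∀ i, b i x = b i x0) ∧ ∀ s ∈ prs, A s x))
      ≤ (∏ s ∈ prs, d s) * PB / 8 + 6 * err := by
    intro e
    set J := prs.filter (fun s => ¬ e ∉ s) with hJ
    have hun : fc e ∪ J = prs := Finset.filter_union_filter_not_eq _ _
    have hdis : Disjoint (fc e) J := Finset.disjoint_filter_filter_not _ _ _
    have hpr : (∏ s ∈ fc e, d s) * ∏ s ∈ J, d s = ∏ s ∈ prs, d s :=
      Finset.prod_filter_mul_prod_filter_not _ _ _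
    have cJ : J.card = 3 := card_cofc e
    have cF : (fc e).card = 3 := card_fc e
    have a1 := cnt (fc e) (Finset.filter_subset _ _) (W e) J (Finset.filter_subset _ _) hdis (by
      intro s hs
      rw [hJ, Finset.mem_filter, not_not] at hs
      exact ⟨e, hs.2, hW e⟩)
    rw [hun, cJ] at a1
    have a2 := cnt ∅ (by simp) (fun _ => True) (fc e) (Finset.filter_subset _ _) (by simp) (by
      intro s hs
      have : s.Nonempty := by rw [← Finset.card_pos, (mem_fc.1 hs).1]; norm_num
      obtain ⟨e, he⟩ := this
      exact ⟨e, he, fun _ _ _ => rfl⟩)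
    simp only [true_and, Finset.empty_union, cF, Finset.notMem_empty, false_imp_iff,
      implies_true, and_true] at a2
    have dB : Dep ({e}ᶜ)ᶜ (fun x => ind (b e x = b e x0)) := by
      intro x y h
      simp only [hb e x y (by simpa using h)]
    have dQ : Dep {e}ᶜ (fun x => (∀ i ∈ ({e}ᶜ : Finset (Fin 4)), b i x = b i x0) ∧
        ∀ s ∈ fc e, A s x) := by
      intro x y h
      apply propext
      refine and_congr (forall₂_congr fun i hi => ?_) (forall₂_congr fun s hs => ?_)
      · rw [(hb i).mono (t := {e}ᶜ) (by simpa [eq_comm] using hi) x y h]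
      · rw [(hA s).mono (t := {e}ᶜ) (by
          intro l hl; simp; rintro rfl; exact (mem_fc.1 hs).2 hl) x y h]
    have spl : ∀ x, (∀ i, b i x = b i x0) ↔
        (∀ i ∈ ({e}ᶜ : Finset (Fin 4)), b i x = b i x0) ∧ b e x = b e x0 := by
      intro x
      constructor
      · exact fun h => ⟨fun i _ => h i, h e⟩
      · rintro ⟨h1, h2⟩ i
        by_cases hi : i = e
        · rw [hi]; exact h2
        · exact h1 i (by simpa using hi)
    have a3 : av (fun x => ind (W e x ∧ (∀ i, b i x = b i x0) ∧ ∀ s ∈ fc e, A s x))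
        ≤ 1 / 8 * av (fun x => ind ((∀ i, b i x = b i x0) ∧ ∀ s ∈ fc e, A s x)) := by
      have e1 : (fun x => ind (W e x ∧ (∀ i, b i x = b i x0) ∧ ∀ s ∈ fc e, A s x))
        = fun x => ind (W e x ∧ (∀ i ∈ ({e}ᶜ : Finset (Fin 4)), b i x = b i x0) ∧
            ∀ s ∈ fc e, A s x) * ind (b e x = b e x0) := by
        funext x; rw [← ind_and]; apply ind_congr; rw [spl x]; tauto
      have e2 : (fun x => ind ((∀ i, b i x = b i x0) ∧ ∀ s ∈ fc e, A s x))
        = fun x => ind ((∀ i ∈ ({e}ᶜ : Finset (Fin 4)), b i x = b i x0) ∧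
            ∀ s ∈ fc e, A s x) * ind (b e x = b e x0) := by
        funext x; rw [← ind_and]; apply ind_congr; rw [spl x]; tauto
      rw [e1, e2, av_indep {e}ᶜ _ _ ?_ dB, av_indep {e}ᶜ _ _ ?_ dB, ← mul_assoc]
      · exact mul_le_mul_of_nonneg_right (hWs e) (av_nonneg fun _ => ind_nonneg _)
      · intro x y h
        have := dQ x y h
        simp only at this
        simp only [this]
      · intro x y h
        have := dQ x y h
        simp only at this
        simp only [this, hW e x y h]
    have b1 := (abs_le.1 a1).2
    have b2 := (abs_le.1 a2).2
    have hJ0 : 0 ≤ ∏ s ∈ J, d s := Finset.prod_nonneg fun s _ => hd0 s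
    have hJ1 : ∏ s ∈ J, d s ≤ 1 := Finset.prod_le_one (fun s _ => hd0 s) fun s _ => hd1 s
    rw [← hpr]
    have b3 := mul_le_mul_of_nonneg_left a3 hJ0
    have b4 := mul_le_mul_of_nonneg_left b2 hJ0
    have b5 := mul_le_mul_of_nonneg_right hJ1 herr0
    push_cast at b1 b2 b4
    rw [← hPB] at b4
    nlinarith
  have c3 : PQ - ∑ e, av (fun x => ind (W e x ∧ (∀ i, b i x = b i x0) ∧ ∀ s ∈ prs, A s x)) ≤
      av (fun x => ind (∀ e, ((∀ i ∈ ({e}ᶜ : Finset (Fin 4)), b i x = b i x0) ∧ ∀ s ∈ fc e, A s x)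
        ∧ ¬ W e x)) := by
    rw [← av_sum, hPQ, ← av_sub]
    refine av_mono fun x => ?_
    have nn : ∀ e ∈ Finset.univ, 0 ≤ ind (W e x ∧ (∀ i, b i x = b i x0) ∧ ∀ s ∈ prs, A s x) :=
      fun e _ => ind_nonneg _
    by_cases hq : (∀ i, b i x = b i x0) ∧ ∀ s ∈ prs, A s x
    · by_cases hw : ∃ e, W e x
      · obtain ⟨e, he⟩ := hw
        have h1 := Finset.single_le_sum nn (Finset.mem_univ e)
        rw [ind_pos ⟨he, hq⟩] at h1
        have h2 := ind_le_one ((∀ i, b i x = b i x0) ∧ ∀ s ∈ prs, A s x)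
        have h3 := ind_nonneg (∀ e, ((∀ i ∈ ({e}ᶜ : Finset (Fin 4)), b i x = b i x0) ∧ ∀ s ∈ fc e, A s x)
          ∧ ¬ W e x)
        linarith
      · push Not at hw
        rw [ind_pos hq, ind_pos (P := ∀ e, _)]
        · have := Finset.sum_nonneg nn
          linarith
        · exact fun e => ⟨⟨fun i _ => hq.1 i, fun s hs => hq.2 s (Finset.mem_filter.1 hs).1⟩, hw e⟩
    · rw [ind_neg hq]
      have := Finset.sum_nonneg nn
      have h3 := ind_nonneg (∀ e, ((∀ i ∈ ({e}ᶜ : Finset (Fin 4)), b i x = b i x0) ∧ ∀ s ∈ fc e, A s x)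
          ∧ ¬ W e x)
      linarith
  have c4 := Finset.sum_le_sum (s := Finset.univ) (fun e _ => c2 e)
  simp only [Finset.sum_const, Finset.card_univ, Fintype.card_fin, nsmul_eq_mul] at c4
  have c5 := (abs_le.1 c1).1
  have c6 := mul_le_mul_of_nonneg_right hPd hPB0
  push_cast at c4
  nlinarith

theorem faces [Nonempty V] (E Q W : Fin 4 → (Fin 4 → V) → Prop) (g : Fin 4 → (Fin 4 → V) → ℝ)
    (hE : ∀ e, Dep {e}ᶜ (E e)) (hQ : ∀ e, Dep {e}ᶜ (Q e)) (hW : ∀ e, Dep {e}ᶜ (W e))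
    (η δ : ℝ) (hη : 0 < η) (hη1 : η ≤ 1) (hδ : 0 ≤ δ)
    (hface : ∀ e, ∀ R : Fin 4 → (Fin 4 → V) → Prop, (∀ i, Dep {i}ᶜ (R i)) →
      |av (fun x => (ind (E e x) - g e x) * ind (∀ i, i ≠ e → R i x))| ≤ δ)
    (hg0 : ∀ e x, 0 ≤ g e x)
    (hg : ∀ e x, (∀ i, i ≠ e → Q i x) → ¬ W e x → η / 2 ≤ g e x)
    (hQQ : ∀ e x, (∀ i, i ≠ e → Q i x) → Q e x) :
    (η / 2) ^ 4 * av (fun x => ind (∀ e, Q e x ∧ ¬ W e x)) - 4 * δ ≤ av (fun x => ind (∀ e, E e x)) := by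
  classical
  let R : Finset (Fin 4) → Fin 4 → (Fin 4 → V) → Prop := fun I e x =>
    Q e x ∧ (if e ∈ I then ¬ W e x else E e x)
  have hR : ∀ I e, Dep {e}ᶜ (R I e) := by
    intro I e x y h
    simp only [R, hQ e x y h, hW e x y h, hE e x y h]
  let D : Finset (Fin 4) → ℝ := fun I => av (fun x => ind (∀ e, R I e x))
  have step : ∀ I e, e ∉ I → η / 2 * D (insert e I) - δ ≤ D I := by
    intro I e he
    have h1 := (abs_le.1 (hface e (R I) (hR I))).1
    simp_rw [sub_mul] at h1
    rw [av_sub] at h1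
    have h2 : D I = av (fun x => ind (E e x) * ind (∀ i, i ≠ e → R I i x)) := by
      simp only [D]
      congr 1; funext x
      rw [← ind_and]
      apply ind_congr
      constructor
      · intro h
        refine ⟨?_, fun i _ => h i⟩
        have := (h e).2
        simpa [he] using this
      · rintro ⟨h1, h2⟩ i
        by_cases hi : i = e
        · subst hi
          exact ⟨hQQ i x fun j hj => (h2 j hj).1, by simpa [he] using h1⟩
        · exact h2 i hi
    have h3 : η / 2 * D (insert e I) ≤ av (fun x => g e x * ind (∀ i, i ≠ e → R I i x)) := by
      simp only [D]
      rw [← av_smul]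
      refine av_mono fun x => ?_
      by_cases h : ∀ i, R (insert e I) i x
      · have h4 : ∀ i, i ≠ e → R I i x := by
          intro i hi
          have := h i
          simpa [R, hi] using this
        have h5 : ¬ W e x := by
          have := (h e).2
          simpa using this
        rw [ind_pos h, ind_pos h4, mul_one, mul_one]
        exact hg e x (fun i hi => (h4 i hi).1) h5
      · rw [ind_neg h, mul_zero]
        exact mul_nonneg (hg0 e x) (ind_nonneg _)
    linarith
  have ind' : ∀ I : Finset (Fin 4), (η / 2) ^ I.card * D I - I.card * δ ≤ D ∅ := by
    intro I
    induction I using Finset.induction_on with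
    | empty => simp
    | insert e I he ih =>
      rw [Finset.card_insert_of_notMem he, pow_succ]
      have h1 := step I e he
      have h2 : 0 ≤ (η / 2) ^ I.card := by positivity
      have h3 : (η / 2) ^ I.card ≤ 1 := pow_le_one₀ (by positivity) (by linarith)
      have h4 := mul_le_mul_of_nonneg_left h1 h2
      have h5 := mul_le_mul_of_nonneg_right h3 hδ
      push_cast
      nlinarith
  have h1 := ind' Finset.univ
  have h2 : D ∅ ≤ av (fun x => ind (∀ e, E e x)) := by
    refine av_mono fun x => ind_mono fun h e => ?_
    have := (h e).2
    simpa using this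
  have h3 : D Finset.univ = av (fun x => ind (∀ e, Q e x ∧ ¬ W e x)) := by
    simp [D, R]
  rw [h3] at h1
  simp only [Finset.card_univ, Fintype.card_fin] at h1
  push_cast at h1
  linarith

theorem bad_color {Ω β : Type} [Fintype Ω] (q : Ω → β) (q0 : Ω → ℕ) (M : ℕ) (hM : ∀ x, q0 x < M)
    (P : ℕ → Ω → Prop) (η : ℝ) (hη : 0 ≤ η)
    (h : ∀ a < M, av (fun x => ind (q0 x = a) * ind (P a x)) ≤ η / (M + 1)) :
    av (fun x => ind (P (q0 x) x)) ≤ η := by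
  have h1 : ∀ x, ind (P (q0 x) x) = ∑ a ∈ Finset.range M, ind (q0 x = a) * ind (P a x) := by
    intro x
    rw [Finset.sum_eq_single (q0 x)]
    · rw [ind_pos rfl, one_mul]
    · intro a _ ha; rw [ind_neg (Ne.symm ha), zero_mul]
    · intro h; exact absurd (Finset.mem_range.2 (hM x)) h
  simp_rw [h1]
  rw [av_sum]
  refine (Finset.sum_le_sum fun a ha => h a (Finset.mem_range.1 ha)).trans ?_
  rw [Finset.sum_const, Finset.card_range, nsmul_eq_mul, mul_div_assoc', div_le_iff₀ (by positivity)]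
  nlinarith

theorem ind_not_forall {ι : Type} (s : Finset ι) (P : ι → Prop) :
    ind (¬ ∀ i ∈ s, P i) ≤ ∑ i ∈ s, ind (¬ P i) := by
  by_cases h : ∀ i ∈ s, P i
  · rw [ind_neg (by simpa using h)]
    exact Finset.sum_nonneg fun _ _ => ind_nonneg _
  · rw [ind_pos h]
    push Not at h
    obtain ⟨i, hi, hP⟩ := h
    rw [← ind_pos hP]
    exact Finset.single_le_sum (f := fun i => ind (¬ P i)) (fun _ _ => ind_nonneg _) hi

theorem pos_lower (φ : ℕ → ℝ) (h : ∀ n, 0 < φ n) (B : ℕ) : ∃ ρ > 0, ∀ M ≤ B, ρ ≤ φ M := by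
  induction B with
  | zero => exact ⟨φ 0, h 0, fun M hM => by rw [Nat.le_zero.1 hM]⟩
  | succ B ih =>
    obtain ⟨ρ, h1, h2⟩ := ih
    refine ⟨min ρ (φ (B + 1)), lt_min h1 (h _), fun M hM => ?_⟩
    rcases Nat.lt_or_ge M (B + 1) with h3 | h3
    · exact (min_le_left _ _).trans (h2 M (by omega))
    · have : M = B + 1 := by omega
      rw [this]; exact min_le_right _ _

theorem av_abs_le {Ω : Type} [Fintype Ω] [Nonempty Ω] (h : Ω → ℝ) (a : ℝ) (ha : 0 ≤ a)
    (hh : av (fun x => h x ^ 2) ≤ a ^ 2) : av (fun x => |h x|) ≤ a := by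
  have h1 := av_cs (fun x => |h x|) (fun _ => 1)
  simp only [mul_one, sq_abs, one_pow] at h1
  rw [av_const, mul_one] at h1
  exact abs_le_of_sq_le_sq' (h1.trans hh) ha |>.2

theorem removal (ε : ℝ) (hε : 0 < ε) : ∃ ρ : ℝ, 0 < ρ ∧ ∀ (V : Type) [Fintype V] [Nonempty V]
    (E : Fin 4 → (Fin 4 → V) → Prop), (∀ e, Dep {e}ᶜ (E e)) →
    av (fun x => ind (∀ e, E e x)) < ρ →
    ∃ E' : Fin 4 → (Fin 4 → V) → Prop, (∀ e, Dep {e}ᶜ (E' e)) ∧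
      (∀ e, av (fun x => ind (E e x ∧ ¬ E' e x)) ≤ ε) ∧ ∀ x, ¬ ∀ e, E' e x := by
  obtain ⟨η, hη, hη1, hηε⟩ : ∃ η : ℝ, 0 < η ∧ η ≤ 1 ∧ 11 * η ≤ ε :=
    ⟨min (ε / 11) 1, by positivity, min_le_right _ _, by
      have := min_le_left (ε / 11) 1; linarith⟩
  let γ : ℕ → ℝ := fun M => (η / (M + 1)) ^ 6 / 240
  have hγ : ∀ M, 0 < γ M := fun M => by positivity
  choose Lb hLb using fun M : ℕ => strong_reg (Finset (Fin 4) × Fin M) ((γ M * (η / (M + 1))) ^ 2)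
    (by have := hγ M; positivity) (fun L => γ M * (η / (L + 1)) ^ 4)
    (fun L => by have := hγ M; positivity)
  let δ1 : ℕ → ℝ := fun M => (η / 2) ^ 4 * ((η / (M + 1)) ^ 6 / 4 * (η / (Lb M + 1)) ^ 4) / 8
  have hδ1 : ∀ M, 0 < δ1 M := fun M => by positivity
  obtain ⟨Mb, hMb⟩ := strong_reg (Fin 4) (η ^ 3 / 32) (by positivity) δ1 hδ1
  obtain ⟨ρ, hρ, hρM⟩ := pos_lower δ1 hδ1 Mb
  refine ⟨ρ, hρ, ?_⟩
  intro V _ _ E hE hsmall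
  obtain ⟨c, c', M, hMM, hcM, hcA, hcA', hcR, hcP, hcE⟩ := hMb (Fin 4 → V) (Finset (Fin 4))
    (fun s x y => ∀ i ∈ s, x i = y i) fc (fun e x => ind (E e x)) (fun _ _ => ind_nonneg _)
    (fun _ _ => ind_le_one _)
  obtain ⟨b, b', L, hLL, hbL, hbA, hbA', hbR, hbP, hbE⟩ := hLb M (Fin 4 → V) (Fin 4)
    (fun i x y => x i = y i) (fun p => p.1) (fun p x => ind (c p.1 x = p.2)) (fun _ _ => ind_nonneg _)
    (fun _ _ => ind_le_one _)
  have dc : ∀ s, Dep s (c s) := fun s x y h => hcA s x y h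
  have dc' : ∀ s, Dep s (c' s) := fun s x y h => hcA' s x y h
  have db : ∀ i, Dep {i} (b i) := fun i x y h => hbA i x y (h i (by simp))
  have db' : ∀ i, Dep {i} (b' i) := fun i x y h => hbA' i x y (h i (by simp))
  have fcsub : ∀ e, ∀ s ∈ fc e, s ⊆ ({e}ᶜ : Finset (Fin 4)) := by
    intro e s hs l hl
    simp; rintro rfl; exact (mem_fc.1 hs).2 hl
  -- notation
  let g : Fin 4 → (Fin 4 → V) → ℝ := fun e => ce (jt (fc e) c) (fun x => ind (E e x))
  let g' : Fin 4 → (Fin 4 → V) → ℝ := fun e => ce (jt (fc e) c') (fun x => ind (E e x))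
  have dg : ∀ e, Dep {e}ᶜ (g e) := fun e => dep_ce _ _ (dep_jt _ _ _ fun s hs =>
    (dc s).mono (fcsub e s hs)) _
  have dg' : ∀ e, Dep {e}ᶜ (g' e) := fun e => dep_ce _ _ (dep_jt _ _ _ fun s hs =>
    (dc' s).mono (fcsub e s hs)) _
  let W : Fin 4 → (Fin 4 → V) → Prop := fun e x => η / 2 < |g' e x - g e x|
  have dW : ∀ e, Dep {e}ᶜ (W e) := by
    intro e x y h
    simp only [W, dg e x y h, dg' e x y h]
  let q : (e : Fin 4) → (Fin 4 → V) → ((({e}ᶜ : Finset (Fin 4)) → ℕ) × (fc e → ℕ)) :=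
    fun e x => (jt {e}ᶜ b x, jt (fc e) c x)
  have hq : ∀ e x y, q e x = q e y ↔
      (∀ i ∈ ({e}ᶜ : Finset (Fin 4)), b i x = b i y) ∧ ∀ s ∈ fc e, c s x = c s y := by
    intro e x y
    simp only [q, Prod.mk.injEq, jt_iff]
  have dq : ∀ e, Dep {e}ᶜ (q e) := by
    intro e x y h
    rw [hq]
    exact ⟨fun i hi => (db i).mono (by simpa [eq_comm] using hi) x y h,
      fun s hs => (dc s).mono (fcsub e s hs) x y h⟩
  let dd : Finset (Fin 4) → ℕ → (Fin 4 → V) → ℝ := fun s a => ce (jt s b) (fun y => ind (c s y = a))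
  let hh : Finset (Fin 4) → ℕ → (Fin 4 → V) → ℝ := fun s a z =>
    |ce (jt s b') (fun y => ind (c s y = a)) z - ce (jt s b) (fun y => ind (c s y = a)) z|
  have djb : ∀ s, Dep s (jt s b) := fun s => dep_jt s s b fun i hi => (db i).mono (by simpa using hi)
  let G1 : Fin 4 → (Fin 4 → V) → Prop := fun i x => η / (L + 1) ≤ av (fun y => ind (b i y = b i x))
  let G2 : Finset (Fin 4) → (Fin 4 → V) → Prop := fun s x => η / (M + 1) ≤ dd s (c s x) x
  let G3 : Finset (Fin 4) → (Fin 4 → V) → Prop := fun s x => ce (jt s b) (hh s (c s x)) x ≤ γ M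
  let G5 : Fin 4 → (Fin 4 → V) → Prop := fun e x => ce (q e) (fun y => ind (W e y)) x ≤ 1 / 8
  let E' : Fin 4 → (Fin 4 → V) → Prop := fun e x => E e x ∧ (∀ i ∈ ({e}ᶜ : Finset (Fin 4)), G1 i x) ∧
    (∀ s ∈ fc e, G2 s x) ∧ (∀ s ∈ fc e, G3 s x) ∧ η ≤ g e x ∧ G5 e x
  refine ⟨E', ?_, ?_, ?_⟩
  · intro e x y h
    have h1 : (∀ i ∈ ({e}ᶜ : Finset (Fin 4)), G1 i x) = (∀ i ∈ ({e}ᶜ : Finset (Fin 4)), G1 i y) := by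
      apply propext
      refine forall₂_congr fun i hi => ?_
      simp only [G1]
      rw [(db i).mono (t := {e}ᶜ) (by simpa [eq_comm] using hi) x y h]
    have h2 : (∀ s ∈ fc e, G2 s x) = (∀ s ∈ fc e, G2 s y) := by
      apply propext
      refine forall₂_congr fun s hs => ?_
      have hxy : ∀ i ∈ s, x i = y i := fun i hi => h i (fcsub e s hs hi)
      simp only [G2, dd]
      rw [dc s x y hxy, ce_congr (jt s b) _ (djb s x y hxy)]
    have h3 : (∀ s ∈ fc e, G3 s x) = (∀ s ∈ fc e, G3 s y) := by
      apply propext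
      refine forall₂_congr fun s hs => ?_
      have hxy : ∀ i ∈ s, x i = y i := fun i hi => h i (fcsub e s hs hi)
      simp only [G3]
      rw [dc s x y hxy, ce_congr (jt s b) _ (djb s x y hxy)]
    have h4 : G5 e x = G5 e y := by
      simp only [G5]
      rw [ce_congr (q e) _ (dq e x y h)]
    simp only [E', h1, h2, h3, h4, hE e x y h, dg e x y h]
  · intro e
    have m1 : ∀ i, av (fun x => ind (¬ G1 i x)) ≤ η := by
      intro i
      simp only [G1, not_le]
      exact bad_cell (b i) L (hbL i) η hη.le
    have m2 : ∀ s, av (fun x => ind (¬ G2 s x)) ≤ η := by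
      intro s
      simp only [G2, not_le]
      refine bad_color (jt s b) (c s) M (hcM s) (fun a x => dd s a x < η / (M + 1)) η hη.le ?_
      intro a _
      exact bad_small (jt s b) (fun y => ind (c s y = a)) _ (by positivity)
    have m3 : ∀ s, av (fun x => ind (¬ G3 s x)) ≤ η := by
      intro s
      simp only [G3, not_le]
      refine bad_color (jt s b) (c s) M (hcM s) (fun a x => γ M < ce (jt s b) (hh s a) x) η hη.le ?_
      intro a ha
      have h1 : av (hh s a) ≤ γ M * (η / (M + 1)) :=
        av_abs_le _ _ (by have := hγ M; positivity) (hbE (s, ⟨a, ha⟩))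
      have h2 := bad_markov (jt s b) (hh s a) (fun x => abs_nonneg _) (γ M) (hγ M)
      refine le_trans (av_mono fun x => mul_le_of_le_one_left (ind_nonneg _) (ind_le_one _)) ?_
      refine h2.trans ?_
      rw [div_le_iff₀ (hγ M)]
      linarith
    have m4 : av (fun x => ind (E e x) * ind (g e x < η)) ≤ η :=
      bad_small (jt (fc e) c) (fun x => ind (E e x)) η hη.le
    have m5 : av (fun x => ind (¬ G5 e x)) ≤ η := by
      simp only [G5, not_le]
      refine (bad_markov (q e) (fun y => ind (W e y)) (fun _ => ind_nonneg _) (1 / 8) (by norm_num)).trans ?_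
      have h1 : av (fun y => ind (W e y)) ≤ (η / 2)⁻¹ ^ 2 * av (fun x => (g' e x - g e x) ^ 2) := by
        rw [← av_smul]
        refine av_mono fun x => ?_
        by_cases hw : W e x
        · rw [ind_pos hw, ← sq_abs (g' e x - g e x), ← mul_pow]
          apply one_le_pow₀
          rw [← div_eq_inv_mul, le_div_iff₀ (by positivity), one_mul]
          exact le_of_lt hw
        · rw [ind_neg hw]; positivity
      have h2 : av (fun x => (g' e x - g e x) ^ 2) ≤ η ^ 3 / 32 := hcE e
      have h3 : (η / 2)⁻¹ ^ 2 * av (fun x => (g' e x - g e x) ^ 2) ≤ (η / 2)⁻¹ ^ 2 * (η ^ 3 / 32) :=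
        mul_le_mul_of_nonneg_left h2 (by positivity)
      have h4 : (η / 2)⁻¹ ^ 2 * (η ^ 3 / 32) = η / 8 := by
        field_simp; norm_num
      linarith
    have tot : av (fun x => ind (E e x ∧ ¬ E' e x)) ≤ av (fun x =>
        (((∑ i ∈ ({e}ᶜ : Finset (Fin 4)), ind (¬ G1 i x)) + ∑ s ∈ fc e, ind (¬ G2 s x)) +
        ∑ s ∈ fc e, ind (¬ G3 s x)) + ind (E e x) * ind (g e x < η) + ind (¬ G5 e x)) := by
      refine av_mono fun x => ?_
      have p1 := ind_not_forall ({e}ᶜ : Finset (Fin 4)) (fun i => G1 i x)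
      have p2 := ind_not_forall (fc e) (fun i => G2 i x)
      have p3 := ind_not_forall (fc e) (fun i => G3 i x)
      have n1 := ind_nonneg (¬ ∀ i ∈ ({e}ᶜ : Finset (Fin 4)), G1 i x)
      have n2 := ind_nonneg (¬ ∀ s ∈ fc e, G2 s x)
      have n3 := ind_nonneg (¬ ∀ s ∈ fc e, G3 s x)
      have n4 : 0 ≤ ind (E e x) * ind (g e x < η) := mul_nonneg (ind_nonneg _) (ind_nonneg _)
      have n5 := ind_nonneg (¬ G5 e x)
      by_cases hx : E e x ∧ ¬ E' e x
      · rw [ind_pos hx]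
        obtain ⟨hx1, hx2⟩ := hx
        by_cases q1 : ∀ i ∈ ({e}ᶜ : Finset (Fin 4)), G1 i x
        · by_cases q2 : ∀ s ∈ fc e, G2 s x
          · by_cases q3 : ∀ s ∈ fc e, G3 s x
            · by_cases q4 : η ≤ g e x
              · by_cases q5 : G5 e x
                · exact absurd ⟨hx1, q1, q2, q3, q4, q5⟩ hx2
                · rw [ind_pos q5] at *; linarith
              · rw [ind_pos hx1, ind_pos (not_le.1 q4)] at *; linarith
            · rw [ind_pos q3] at *; linarith
          · rw [ind_pos q2] at *; linarith
        · rw [ind_pos q1] at *; linarith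
      · rw [ind_neg hx]; linarith
    refine tot.trans ?_
    rw [av_add, av_add, av_add, av_add, av_sum, av_sum, av_sum]
    have s1 := Finset.sum_le_sum (s := ({e}ᶜ : Finset (Fin 4))) (fun i _ => m1 i)
    have s2 := Finset.sum_le_sum (s := fc e) (fun s _ => m2 s)
    have s3 := Finset.sum_le_sum (s := fc e) (fun s _ => m3 s)
    rw [Finset.sum_const, card_fc] at s2 s3
    rw [Finset.sum_const, Finset.card_compl, Finset.card_singleton, Fintype.card_fin] at s1
    norm_num at s1 s2 s3
    linarith
  · intro x0 hx0
    have good1 : ∀ i, G1 i x0 := by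
      intro i
      obtain ⟨e, he⟩ : ∃ e : Fin 4, e ≠ i := exists_ne i
      exact (hx0 e).2.1 i (by simpa [eq_comm] using he)
    have exface : ∀ s ∈ prs, ∃ e, s ∈ fc e := by decide
    have good2 : ∀ s ∈ prs, G2 s x0 := by
      intro s hs
      obtain ⟨e, he⟩ := exface s hs
      exact (hx0 e).2.2.1 s he
    have good3 : ∀ s ∈ prs, G3 s x0 := by
      intro s hs
      obtain ⟨e, he⟩ := exface s hs
      exact (hx0 e).2.2.2.1 s he
    have PBlow := prodB b db x0 (η / (L + 1)) (by positivity) good1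
    set PB := av (fun x => ind (∀ i, b i x = b i x0)) with hPB
    have hPB0 : 0 ≤ PB := av_nonneg fun _ => ind_nonneg _
    have hM1 : (0:ℝ) < M + 1 := by positivity
    have cc := cell_count (fun s x => c s x = c s x0) (fun s x y h => by simp only [dc s x y h])
      b db x0 (fun s => dd s (c s x0) x0) (fun s => ce_nonneg _ (fun _ => ind_nonneg _) _)
      (fun s => ce_le_one _ (fun _ => ind_le_one _) _) (2 * γ M * PB)
      (mul_nonneg (by have := hγ M; positivity) hPB0) (by
        intro s hs Z hZ hZB
        have := pair_step s (mem_prs.1 hs) (fun x => c s x = c s x0)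
          (fun x y h => by simp only [dc s x y h]) b b' db db' x0 (γ M) (γ M * (η / (L + 1)) ^ 4)
          (fun U hU => hbP (s, ⟨c s x0, hcM s x0⟩) U hU) (good3 s hs) Z hZ hZB
        refine this.trans ?_
        have h1 := mul_le_mul_of_nonneg_left PBlow (hγ M).le
        rw [← hPB]
        linarith)
      (η / (M + 1)) (by positivity) good2 (by
        rw [← hPB]
        apply le_of_eq
        simp only [γ]; ring)
      W dW (by
        intro e
        have h1 := ce_cell (q e) (fun y => ind (W e y)) x0
        simp_rw [← ind_and, hq] at h1
        rw [h1]
        exact mul_le_mul_of_nonneg_right (hx0 e).2.2.2.2.2 (av_nonneg fun _ => ind_nonneg _))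
    have ff := faces E (fun e x => (∀ i ∈ ({e}ᶜ : Finset (Fin 4)), b i x = b i x0) ∧
        ∀ s ∈ fc e, c s x = c s x0) W g' hE (by
          intro e x y h
          have := dq e x y h
          rw [hq] at this
          apply propext
          refine and_congr (forall₂_congr fun i hi => ?_) (forall₂_congr fun s hs => ?_)
          · rw [this.1 i hi]
          · rw [this.2 s hs]) dW η (δ1 M) hη hη1 (hδ1 M).le (by
          intro e R hR
          refine face_step e (fun x => ind (E e x) - g' e x) ?_ _ (fun U hU => hcP e U hU) R hR
          intro x y h
          simp only [hE e x y h, dg' e x y h])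
        (fun e x => ce_nonneg _ (fun _ => ind_nonneg _) _) (by
          intro e x hQ hW
          have h1 : g e x = g e x0 := by
            apply ce_congr
            rw [jt_iff]
            intro s hs
            have : ∀ e : Fin 4, ∀ s ∈ fc e, ∃ i, i ≠ e ∧ s ∈ fc i := by decide
            obtain ⟨i, hi, his⟩ := this e s hs
            exact (hQ i hi).2 s his
          have h2 : η ≤ g e x0 := (hx0 e).2.2.2.2.1
          simp only [W, not_lt] at hW
          have := (abs_le.1 hW).1
          linarith) (by
          intro e x hQ
          refine ⟨fun i hi => ?_, fun s hs => ?_⟩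
          · have : ∀ e i : Fin 4, ∃ k, k ≠ e ∧ i ∈ ({k}ᶜ : Finset (Fin 4)) := by decide
            obtain ⟨k, hk, hik⟩ := this e i
            exact (hQ k hk).1 i hik
          · have : ∀ e : Fin 4, ∀ s ∈ fc e, ∃ i, i ≠ e ∧ s ∈ fc i := by decide
            obtain ⟨i, hi, his⟩ := this e s hs
            exact (hQ i hi).2 s his)
    have hρ2 := hρM M hMM
    have k1 : (η / (Lb M + 1)) ^ 4 ≤ PB := by
      refine le_trans ?_ PBlow
      have : (L : ℝ) ≤ Lb M := by exact_mod_cast hLL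
      gcongr
    have k2 : (η / (M + 1)) ^ 6 / 4 * (η / (Lb M + 1)) ^ 4 ≤ (η / (M + 1)) ^ 6 / 4 * PB :=
      mul_le_mul_of_nonneg_left k1 (by positivity)
    have k3 := mul_le_mul_of_nonneg_left (k2.trans cc) (by positivity : 0 ≤ (η / 2) ^ 4)
    have k4 : (η / 2) ^ 4 * ((η / (M + 1)) ^ 6 / 4 * (η / (Lb M + 1)) ^ 4) = 8 * δ1 M := by
      simp only [δ1]; ring
    rw [k4] at k3
    have := hδ1 M
    linarith

end removal

section application

theorem av_ind {Ω : Type} [Fintype Ω] (P : Ω → Prop) (S : Finset Ω) (hS : ∀ x, x ∈ S ↔ P x) :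
    av (fun x => ind (P x)) = (S.card : ℝ) / Fintype.card Ω := by
  classical
  unfold av ind
  rw [Finset.sum_boole]
  have : S = Finset.univ.filter P := by ext x; simp [hS]
  rw [this]

open Classical in
theorem ring_count (ε : ℝ) (hε : 0 < ε) : ∃ ρ : ℝ, 0 < ρ ∧ ∀ (V : Type) [Fintype V] [CommRing V]
    (A : Finset V), 4 * ε * Fintype.card V < A.card → ∀ P : Finset (V × V),
    (∀ p, p ∈ P ↔ ∀ e : Fin 4, p.1 - ((e : ℕ) : V) * p.2 ∈ A) →
    ρ * (Fintype.card V : ℝ) ^ 2 ≤ (P.card : ℝ) := by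
  obtain ⟨ρ, hρ, H⟩ := removal ε hε
  refine ⟨ρ, hρ, ?_⟩
  intro V _ _ A hA P hP
  set N := Fintype.card V with hN
  have hN0 : (0:ℝ) < N := by
    have : 0 < N := Fintype.card_pos
    exact_mod_cast this
  have cardΩ : (Fintype.card (Fin 4 → V) : ℝ) = (N:ℝ) ^ 4 := by
    rw [Fintype.card_fun, Fintype.card_fin]; push_cast; rfl
  let a : (Fin 4 → V) → V := fun x => x 1 + 2 * x 2 + 3 * x 3
  let σ : (Fin 4 → V) → V := fun x => x 0 + x 1 + x 2 + x 3
  let E : Fin 4 → (Fin 4 → V) → Prop := fun e x => a x - ((e : ℕ) : V) * σ x ∈ A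
  have hE : ∀ e, Dep {e}ᶜ (E e) := by
    intro e x y h
    have : a x - ((e : ℕ) : V) * σ x = a y - ((e : ℕ) : V) * σ y := by
      simp only [a, σ]
      fin_cases e
      · rw [h 1 (by decide), h 2 (by decide), h 3 (by decide)]; simp
      · rw [h 0 (by decide), h 2 (by decide), h 3 (by decide)]; simp; ring
      · rw [h 0 (by decide), h 1 (by decide), h 3 (by decide)]; simp; ring
      · rw [h 0 (by decide), h 1 (by decide), h 2 (by decide)]; simp; ring
    simp only [E, this]
  have big : ρ ≤ av (fun x => ind (∀ e, E e x)) := by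
    by_contra hcon
    obtain ⟨E', hE'D, hE'1, hE'2⟩ := H V E hE (not_le.1 hcon)
    let Φ : V × V × V → (Fin 4 → V) := fun p =>
      ![-(p.1 - 2 * p.2.1 - 3 * p.2.2) - p.2.1 - p.2.2, p.1 - 2 * p.2.1 - 3 * p.2.2, p.2.1, p.2.2]
    have hΦE : ∀ p, p.1 ∈ A → ∀ e, E e (Φ p) := by
      intro p hp e
      have h1 : a (Φ p) = p.1 := by simp [a, Φ]; try ring
      have h2 : σ (Φ p) = 0 := by simp [σ, Φ]; try ring
      simp only [E, h1, h2, mul_zero, sub_zero]; exact hp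
    let T : Fin 4 → Finset (V × V × V) := fun e =>
      Finset.univ.filter (fun p => p.1 ∈ A ∧ ¬ E' e (Φ p))
    have t1 : A ×ˢ (Finset.univ : Finset (V × V)) ⊆ Finset.univ.biUnion T := by
      intro p hp
      have hpA : p.1 ∈ A := (Finset.mem_product.1 hp).1
      have := hE'2 (Φ p)
      push Not at this
      obtain ⟨e, he⟩ := this
      simp only [Finset.mem_biUnion, T, Finset.mem_filter, Finset.mem_univ, true_and]
      exact ⟨e, hpA, he⟩
    have t2 : A.card * N ^ 2 ≤ ∑ e, (T e).card := by
      have := (Finset.card_le_card t1).trans Finset.card_biUnion_le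
      rwa [Finset.card_product, Finset.card_univ, Fintype.card_prod, ← sq] at this
    have t3 : ∀ e, (T e).card * N ≤ (Finset.univ.filter (fun x => E e x ∧ ¬ E' e x)).card := by
      intro e
      rw [hN, ← Finset.card_univ, ← Finset.card_product]
      refine Finset.card_le_card_of_injOn (fun p => Function.update (Φ p.1) e p.2) ?_ ?_
      · rintro ⟨p, t⟩ hp
        simp only [Finset.coe_product, Set.mem_prod, Finset.mem_coe, T, Finset.mem_filter,
          Finset.mem_univ, true_and, and_true] at hp
        have hu : ∀ i ∈ ({e}ᶜ : Finset (Fin 4)), Function.update (Φ p) e t i = Φ p i := by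
          intro i hi
          exact Function.update_of_ne (by simpa using hi) _ _
        simp only [Finset.coe_filter, Finset.mem_univ, true_and, Set.mem_setOf_eq]
        rw [hE e _ _ hu, hE'D e _ _ hu]
        exact ⟨hΦE p hp.1 e, hp.2⟩
      · rintro ⟨⟨p1, p2, p3⟩, t⟩ _ ⟨⟨r1, r2, r3⟩, t'⟩ _ h
        simp only at h
        have hi := fun i => congrFun h i
        have h0 := hi 0
        have h1 := hi 1
        have h2 := hi 2
        have h3 := hi 3
        simp only [Prod.mk.injEq]
        fin_cases e <;> simp [Function.update, Φ] at h0 h1 h2 h3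
        · subst h2 h3
          refine ⟨⟨?_, rfl, rfl⟩, h0⟩
          linear_combination h1
        · subst h2 h3
          refine ⟨⟨?_, rfl, rfl⟩, h1⟩
          linear_combination -h0
        · subst h3
          have : p2 = r2 := by linear_combination -h0 - h1
          subst this
          refine ⟨⟨?_, rfl, rfl⟩, h2⟩
          linear_combination h1
        · subst h2
          have : p3 = r3 := by linear_combination -h0 - h1
          subst this
          refine ⟨⟨?_, rfl, rfl⟩, h3⟩
          linear_combination h1
    have t4 : ∀ e, ((T e).card : ℝ) * N ≤ ε * N ^ 4 := by
      intro e
      have h1 := hE'1 e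
      rw [av_ind _ (Finset.univ.filter (fun x => E e x ∧ ¬ E' e x)) (by simp), cardΩ, div_le_iff₀ (by positivity)] at h1
      refine le_trans ?_ h1
      exact_mod_cast t3 e
    have t5 : (A.card : ℝ) * N ^ 2 * N ≤ 4 * (ε * N ^ 4) := by
      have h1 : (A.card : ℝ) * N ^ 2 ≤ ∑ e, ((T e).card : ℝ) := by exact_mod_cast t2
      have h2 := mul_le_mul_of_nonneg_right h1 hN0.le
      rw [Finset.sum_mul] at h2
      refine h2.trans ((Finset.sum_le_sum fun e _ => t4 e).trans ?_)
      simp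
    have t6 := mul_lt_mul_of_pos_right hA (by positivity : (0:ℝ) < N ^ 3)
    nlinarith
  rw [av_ind _ (Finset.univ.filter (fun x => ∀ e, E e x)) (by simp), cardΩ, le_div_iff₀ (by positivity)] at big
  have inj : (Finset.univ.filter (fun x => ∀ e, E e x)).card ≤ P.card * N ^ 2 := by
    have : P.card * N ^ 2 = (P ×ˢ (Finset.univ : Finset (V × V))).card := by
      rw [Finset.card_product, Finset.card_univ, Fintype.card_prod, ← sq]
    rw [this]
    refine Finset.card_le_card_of_injOn (fun x => ((a x, σ x), (x 2, x 3))) ?_ ?_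
    · intro x hx
      simp only [Finset.coe_filter, Finset.mem_univ, true_and, Set.mem_setOf_eq] at hx
      simp only [Finset.coe_product, Set.mem_prod, Finset.mem_coe, hP, Finset.mem_filter,
          Finset.mem_univ, true_and, and_true]
      exact hx
    · intro x _ y _ h
      simp only [Prod.mk.injEq, a, σ] at h
      obtain ⟨⟨h1, h2⟩, h3, h4⟩ := h
      have g1 : x 1 = y 1 := by linear_combination h1 - 2 * h3 - 3 * h4
      have g0 : x 0 = y 0 := by linear_combination h2 - g1 - h3 - h4
      funext i
      fin_cases i
      · exact g0
      · exact g1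
      · exact h3
      · exact h4
  have inj' : ((Finset.univ.filter (fun x => ∀ e, E e x)).card : ℝ) ≤ P.card * N ^ 2 := by
    exact_mod_cast inj
  have h7 : (ρ * (N:ℝ) ^ 2) * N ^ 2 ≤ P.card * N ^ 2 := by
    calc (ρ * (N:ℝ) ^ 2) * N ^ 2 = ρ * N ^ 4 := by ring
      _ ≤ _ := big.trans inj'
  exact le_of_mul_le_mul_right h7 (by positivity)

end application

end Varn

/-- Varnavides' theorem for 4APs. -/
theorem stmt_3 (α : ℝ) (hα : 0 < α) :
    ∃ n₀ : ℕ, ∃ g : ℝ, 0 < g ∧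
      ∀ n : ℕ, n₀ ≤ n → ∀ A ⊆ Finset.Icc 1 n, α * n ≤ A.card →
        g * n ^ 2 ≤ ((fourAPs n A).card : ℝ) := by
  classical
  obtain ⟨ρ, hρ, H⟩ := Varn.ring_count (α / 32) (by positivity)
  obtain ⟨n₁, hn₁⟩ := exists_nat_ge (2 / (7 * ρ))
  refine ⟨n₁ + 1, ρ, hρ, ?_⟩
  intro n hn A hA hcard
  have hn0 : 0 < n := by omega
  have hnR : (0:ℝ) < n := by exact_mod_cast hn0
  haveI : NeZero (4 * n) := ⟨by omega⟩
  have hmem : ∀ a ∈ A, 1 ≤ a ∧ a ≤ n := fun a ha => Finset.mem_Icc.1 (hA ha)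
  have cinj : ∀ a b : ℕ, a < 4 * n → b < 4 * n → (a : ZMod (4 * n)) = b → a = b := by
    intro a b h1 h2 h
    rw [ZMod.natCast_eq_natCast_iff] at h
    exact Nat.ModEq.eq_of_lt_of_lt h h1 h2
  let B : Finset (ZMod (4 * n)) := A.image (fun a : ℕ => (a : ZMod (4 * n)))
  have hB : B.card = A.card := by
    refine Finset.card_image_of_injOn fun a ha b hb h => ?_
    have h1 := hmem a ha
    have h2 := hmem b hb
    exact cinj a b (by omega) (by omega) h
  have key := H (ZMod (4 * n)) B (by
    rw [ZMod.card, hB]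
    push_cast
    nlinarith [mul_pos hα hnR])
  obtain ⟨P, hP⟩ : ∃ P : Finset (ZMod (4 * n) × ZMod (4 * n)), ∀ p, p ∈ P ↔
      ∀ e : Fin 4, p.1 - ((e : ℕ) : ZMod (4 * n)) * p.2 ∈ B :=
    ⟨Finset.univ.filter (fun p => ∀ e : Fin 4, p.1 - ((e : ℕ) : ZMod (4 * n)) * p.2 ∈ B), by simp⟩
  replace key := key P hP
  rw [ZMod.card] at key
  have hsub : P ⊆ (Finset.univ.image (fun z : ZMod (4 * n) => (z, (0 : ZMod (4 * n)))) ∪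
      (fourAPs n A).image (fun p : ℕ × ℕ =>
        (((p.1 + 3 * p.2 : ℕ) : ZMod (4 * n)), ((p.2 : ℕ) : ZMod (4 * n))))) ∪
      (fourAPs n A).image (fun p : ℕ × ℕ =>
        (((p.1 : ℕ) : ZMod (4 * n)), -((p.2 : ℕ) : ZMod (4 * n)))) := by
    rintro ⟨z, s⟩ hp
    simp only [hP, Finset.mem_filter, Finset.mem_univ, true_and, B, Finset.mem_image] at hp
    obtain ⟨a0, m0, e0⟩ := hp 0
    obtain ⟨a1, m1, e1⟩ := hp 1
    obtain ⟨a2, m2, e2⟩ := hp 2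
    obtain ⟨a3, m3, e3⟩ := hp 3
    simp at e0 e1
    have v2 : ((2 : Fin 4) : ℕ) = 2 := rfl
    have v3 : ((3 : Fin 4) : ℕ) = 3 := rfl
    rw [v2] at e2
    rw [v3] at e3
    push_cast at e2 e3
    have b0 := hmem a0 m0
    have b1 := hmem a1 m1
    have b2 := hmem a2 m2
    have b3 := hmem a3 m3
    have r1 : a0 + a2 = 2 * a1 := by
      refine cinj _ _ (by omega) (by omega) ?_
      push_cast
      rw [e0, e1, e2]; ring
    have r2 : a1 + a3 = 2 * a2 := by
      refine cinj _ _ (by omega) (by omega) ?_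
      push_cast
      rw [e3, e1, e2]; ring
    have hs : s = a0 - a1 := by rw [e0, e1]; ring
    rw [Finset.mem_union, Finset.mem_union]
    rcases lt_trichotomy a0 a1 with h | h | h
    · right
      obtain ⟨d, rfl⟩ := Nat.exists_eq_add_of_lt h
      rw [Finset.mem_image]
      refine ⟨(a0, d + 1), ?_, ?_⟩
      · simp only [fourAPs, Finset.mem_filter, Finset.mem_product, Finset.mem_Icc]
        have q2 : a0 + 2 * (d + 1) = a2 := by omega
        have q3 : a0 + 3 * (d + 1) = a3 := by omega
        rw [q2, q3]
        exact ⟨by omega, m0, m1, m2, m3⟩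
      · rw [hs, ← e0]
        push_cast
        rw [Prod.mk.injEq]
        exact ⟨rfl, by ring⟩
    · left; left
      rw [Finset.mem_image]
      refine ⟨z, Finset.mem_univ _, ?_⟩
      rw [hs, h, sub_self]
    · left; right
      obtain ⟨d, rfl⟩ := Nat.exists_eq_add_of_lt h
      rw [Finset.mem_image]
      refine ⟨(a3, d + 1), ?_, ?_⟩
      · simp only [fourAPs, Finset.mem_filter, Finset.mem_product, Finset.mem_Icc]
        have q1 : a3 + (d + 1) = a2 := by omega
        have q2 : a3 + 2 * (d + 1) = a1 := by omega
        have q3 : a3 + 3 * (d + 1) = a1 + d + 1 := by omega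
        rw [q1, q2, q3]
        exact ⟨by omega, m3, m2, m1, m0⟩
      · have q3 : a3 + 3 * (d + 1) = a1 + d + 1 := by omega
        simp only [q3]
        rw [hs, ← e0]
        push_cast
        rw [Prod.mk.injEq]
        exact ⟨rfl, by ring⟩
  have hc : P.card ≤ 4 * n + (fourAPs n A).card + (fourAPs n A).card := by
    refine (Finset.card_le_card hsub).trans ?_
    refine (Finset.card_union_le _ _).trans (add_le_add ?_ Finset.card_image_le)
    refine (Finset.card_union_le _ _).trans (add_le_add ?_ Finset.card_image_le)
    refine Finset.card_image_le.trans ?_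
    rw [Finset.card_univ, ZMod.card]
  have hc' : (P.card : ℝ) ≤ 4 * n + (fourAPs n A).card + (fourAPs n A).card := by
    exact_mod_cast hc
  push_cast at key
  have hn2 : 2 ≤ 7 * ρ * n := by
    have h1 : (n₁ : ℝ) ≤ n := by exact_mod_cast (by omega : n₁ ≤ n)
    have h2 := hn₁.trans h1
    rw [div_le_iff₀ (by positivity)] at h2
    linarith
  nlinarith [mul_le_mul_of_nonneg_right hn2 hnR.le]
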